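/- arXiv:2210.17458 — 2 statements merged into one kernel-verified Lean document; each statement's English description precedes it below -/
import Mathlib

section
/- Let Ω = B(0,R)∖B(0,R/K) with K > 1, and let ω ∈ L^∞(ℝ²) be supported in Ω and 2π/N-periodic in the angular variable (i.e. ω(r, α + 2π/N) = ω(r, α) in polar coordinates). Then the radial velocity satisfies ‖v_r[ω]‖_{L^∞(Ω)} ≤ C_K · R · ‖ω‖_{L^∞} · N^{−1} log N for N ≥ 2, where C_K depends only on K. -/
open MeasureTheory Real
open scoped RealInnerProductSpace

/-- The rotation by 90 degrees: `(a,b)^⊥ = (-b,a)`. -/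
noncomputable def perp (x : EuclideanSpace ℝ (Fin 2)) : EuclideanSpace ℝ (Fin 2) :=
  (WithLp.equiv 2 (Fin 2 → ℝ)).symm ![-x 1, x 0]

/-- Rotation of the plane by angle `θ`. -/
noncomputable def rot (θ : ℝ) (x : EuclideanSpace ℝ (Fin 2)) : EuclideanSpace ℝ (Fin 2) :=
  (WithLp.equiv 2 (Fin 2 → ℝ)).symm
    ![Real.cos θ * x 0 - Real.sin θ * x 1, Real.sin θ * x 0 + Real.cos θ * x 1]

/-- The 2D Biot–Savart velocity `v[ω](x) = ∫ (x−y)^⊥ ω(y)/|x−y|² dy`. -/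
noncomputable def biotSavart (ω : EuclideanSpace ℝ (Fin 2) → ℝ)
    (x : EuclideanSpace ℝ (Fin 2)) : EuclideanSpace ℝ (Fin 2) :=
  ∫ y, (ω y / ‖x - y‖ ^ 2) • perp (x - y)

/-- The radial component `v_r[ω](x) = x̂ · v[ω](x)`. -/
noncomputable def vrad (ω : EuclideanSpace ℝ (Fin 2) → ℝ)
    (x : EuclideanSpace ℝ (Fin 2)) : ℝ :=
  ⟪‖x‖⁻¹ • x, biotSavart ω x⟫


noncomputable def gfun (φ : ℝ) : ℝ := (√|Real.sin (φ / 2)|)⁻¹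
noncomputable def hfun (τ : ℝ) : ℝ := 2 * (√|τ|)⁻¹ * Real.exp (-|τ| / 8)

lemma hfun_nonneg (τ : ℝ) : 0 ≤ hfun τ := by unfold hfun; positivity
lemma gfun_nonneg (τ : ℝ) : 0 ≤ gfun τ := by unfold gfun; positivity

lemma integrable_of_even' {f : ℝ → ℝ} (he : ∀ x, f (-x) = f x)
    (hf : IntegrableOn f (Set.Ioi 0)) : Integrable f := by
  have h1 : IntegrableOn f (Set.Iic 0) := by
    have := IntegrableOn.comp_neg_Iic (f := f) (c := 0) ((integrableOn_Ici_iff_integrableOn_Ioi).2 (by simpa using hf))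
    simpa [he] using this
  rw [← integrableOn_univ, ← Set.Iic_union_Ioi (a := (0:ℝ))]
  exact h1.union hf

lemma hfun_integrable : Integrable hfun := by
  apply integrable_of_even'
  · intro x; simp [hfun]
  · have := integrableOn_rpow_mul_exp_neg_mul_rpow (p := 1) (s := -(1/2)) (b := 1/8)
      (by norm_num) (by norm_num) (by norm_num)
    refine IntegrableOn.congr_fun (this.const_mul 2) (fun x hx => ?_) measurableSet_Ioi
    have hx : 0 < x := hx
    simp only [hfun, abs_of_pos hx, Real.rpow_neg hx.le, Real.sqrt_eq_rpow, Real.rpow_one]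
    rw [mul_assoc]; congr 3; ring

lemma gfun_periodic : Function.Periodic gfun (2 * π) := by
  intro x
  simp only [gfun]
  rw [show (x + 2 * π) / 2 = x / 2 + π by ring, Real.sin_add_pi, abs_neg]

lemma gfun_measurable : Measurable gfun := by unfold gfun; fun_prop

lemma gfun_intervalIntegrable (a b : ℝ) : IntervalIntegrable gfun volume a b := by
  apply gfun_periodic.intervalIntegrable (t := -π) (by positivity)
  have h1 : IntervalIntegrable gfun volume 0 π := by
    have h0 : IntervalIntegrable (fun x : ℝ => √π * x ^ (-(1/2) : ℝ)) volume 0 π :=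
      (intervalIntegral.intervalIntegrable_rpow' (by norm_num)).const_mul _
    refine h0.mono_fun' gfun_measurable.aestronglyMeasurable ?_
    rw [Set.uIoc_of_le pi_pos.le]
    filter_upwards [ae_restrict_mem measurableSet_Ioc] with x hx
    rw [Real.norm_of_nonneg (gfun_nonneg x), Real.rpow_neg hx.1.le, ← Real.sqrt_eq_rpow]
    have h2 := Real.mul_abs_le_abs_sin (x := x / 2) (by rw [abs_of_pos (by linarith [hx.1])]; linarith [hx.2])
    rw [abs_of_pos (by linarith [hx.1] : 0 < x / 2)] at h2
    have h3 : x / π ≤ |Real.sin (x / 2)| := by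
      convert h2 using 1; field_simp
    have h4 : 0 < x / π := div_pos hx.1 pi_pos
    unfold gfun
    calc _ ≤ (√(x / π))⁻¹ := by gcongr
      _ = _ := by rw [Real.sqrt_div hx.1.le, inv_div]; rfl
  · refine IntervalIntegrable.trans (b := 0) ?_ ?_
    · have := h1.comp_mul_left (c := -1)
      have h2 : (fun x => gfun (-1 * x)) = gfun := by
        funext x; simp [gfun, neg_div]
      rw [h2] at this
      convert this.symm using 1 <;> ring
    · convert h1 using 1; ring

lemma gfun_comp_intervalIntegrable (N : ℕ) (hN : 0 < N) (d a b : ℝ) :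
    IntervalIntegrable (fun β => gfun (N * β - d)) volume a b := by
  have hN' : (N : ℝ) ≠ 0 := by positivity
  have := ((gfun_intervalIntegrable (N * a - d) (N * b - d)).comp_sub_right d).comp_mul_left (c := (N : ℝ))
  simpa [hN'] using this

lemma gfun_comp_integral (N : ℕ) (hN : 0 < N) (d : ℝ) :
    ∫ β in (-π)..π, gfun (N * β - d) = ∫ φ in (0)..(2 * π), gfun φ := by
  have hN' : (N : ℝ) ≠ 0 := by positivity
  rw [intervalIntegral.integral_comp_mul_sub _ hN',
    show (N : ℝ) * π - d = (N * (-π) - d) + (N : ℤ) • (2 * π) by simp; ring,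
    gfun_periodic.intervalIntegral_add_zsmul_eq _ _ gfun_intervalIntegrable,
    gfun_periodic.intervalIntegral_add_eq _ 0]
  simp [hN']

lemma sinh_lower {x : ℝ} (hx : 0 ≤ x) : x * Real.exp (x / 2) / 2 ≤ Real.sinh x := by
  have h1 : Real.sinh x = 2 * Real.sinh (x / 2) * Real.cosh (x / 2) := by
    rw [← Real.sinh_two_mul]; congr 1; ring
  have h2 : x / 2 ≤ Real.sinh (x / 2) := Real.self_le_sinh_iff.2 (by linarith)
  have h3 : Real.exp (x / 2) / 2 ≤ Real.cosh (x / 2) := by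
    rw [Real.cosh_eq]; linarith [Real.exp_pos (-(x / 2))]
  have h4 := Real.exp_pos (x / 2)
  rw [h1]
  calc _ = 2 * (x / 2) * (Real.exp (x / 2) / 2) := by ring
    _ ≤ _ := by gcongr; 

lemma sinh_hfun {t τ : ℝ} (hτ : τ ≠ 0) (h : |τ| ≤ |t|) :
    (√|Real.sinh (t / 2)|)⁻¹ ≤ hfun τ := by
  have hp : 0 < |τ| := abs_pos.2 hτ
  have h1 : |τ| / 2 * Real.exp (|τ| / 2 / 2) / 2 ≤ |Real.sinh (t / 2)| := by
    rw [Real.abs_sinh, abs_div, abs_two]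
    exact (sinh_lower (by positivity)).trans (Real.sinh_le_sinh.2 (by linarith))
  have h2 : hfun τ = (√(|τ| / 2 * Real.exp (|τ| / 2 / 2) / 2))⁻¹ := by
    have : |τ| / 2 * Real.exp (|τ| / 2 / 2) / 2 = |τ| * (Real.exp (|τ| / 8) / 2) ^ 2 := by
      rw [div_pow, ← Real.exp_nat_mul]; push_cast
      rw [show 2 * (|τ| / 8) = |τ| / 2 / 2 by ring]; ring
    rw [this, Real.sqrt_mul hp.le, Real.sqrt_sq (by positivity), hfun, neg_div, Real.exp_neg]
    field_simp
  rw [h2]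
  gcongr

lemma amgm {a b : ℝ} (ha : 0 < a) (hb : 0 < b) :
    b / (a ^ 2 + b ^ 2) ≤ (√a)⁻¹ * (√b)⁻¹ := by
  obtain ⟨x, hx, rfl⟩ : ∃ x, 0 < x ∧ a = x ^ 2 := ⟨√a, by positivity, by rw [Real.sq_sqrt ha.le]⟩
  obtain ⟨y, hy, rfl⟩ : ∃ x, 0 < x ∧ b = x ^ 2 := ⟨√b, by positivity, by rw [Real.sq_sqrt hb.le]⟩
  rw [Real.sqrt_sq hx.le, Real.sqrt_sq hy.le, ← mul_inv, ← one_div, div_le_div_iff₀ (by positivity) (by positivity)]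
  rcases le_total x y with h | h
  · have : x * y ^ 3 ≤ y * y ^ 3 := by gcongr
    nlinarith [pow_pos hx 4]
  · have : x * y ^ 3 ≤ x * x ^ 3 := by gcongr
    nlinarith [pow_pos hy 4]

lemma kernel_bound {t φ : ℝ} (ht : t ≠ 0) :
    |((1 - Complex.exp (t + φ * Complex.I))⁻¹).im| ≤ (√|Real.sinh (t / 2)|)⁻¹ * gfun φ := by
  have him : (Complex.exp (t + φ * Complex.I)).im = Real.exp t * Real.sin φ := by
    simp [Complex.exp_im]
  have hre : (Complex.exp (t + φ * Complex.I)).re = Real.exp t * Real.cos φ := by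
    simp [Complex.exp_re]
  have ha : 0 < |Real.sinh (t / 2)| := abs_pos.2 (by simpa using ht)
  have hE := Real.exp_pos t
  have hn : Complex.normSq (1 - Complex.exp (t + φ * Complex.I)) =
      4 * Real.exp t * (|Real.sinh (t / 2)| ^ 2 + |Real.sin (φ / 2)| ^ 2) := by
    rw [Complex.normSq_apply, Complex.sub_re, Complex.sub_im, him, hre, sq_abs, sq_abs]
    have e1 : Real.cos φ = 1 - 2 * Real.sin (φ / 2) ^ 2 := by
      have := Real.cos_sq' (φ / 2)
      have h2 := Real.cos_two_mul (φ / 2)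
      rw [show 2 * (φ / 2) = φ by ring] at h2
      linarith
    have e2 : 4 * Real.exp t * Real.sinh (t / 2) ^ 2 = (Real.exp t - 1) ^ 2 := by
      rw [Real.sinh_eq, Real.exp_neg]
      have : Real.exp t = Real.exp (t / 2) ^ 2 := by rw [← Real.exp_nat_mul]; congr 1; push_cast; ring
      have h0 := Real.exp_pos (t / 2)
      rw [this]; field_simp; ring
    have e3 := Real.sin_sq_add_cos_sq φ
    simp only [Complex.one_re, Complex.one_im]
    have : (1 - Real.exp t * Real.cos φ) * (1 - Real.exp t * Real.cos φ) +
      (0 - Real.exp t * Real.sin φ) * (0 - Real.exp t * Real.sin φ) =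
      1 - 2 * Real.exp t * Real.cos φ + Real.exp t ^ 2 := by linear_combination Real.exp t ^ 2 * e3
    rw [this, mul_add, e2, e1]; ring
  have hs : |Real.sin φ| ≤ 2 * |Real.sin (φ / 2)| := by
    rw [show φ = 2 * (φ / 2) by ring, Real.sin_two_mul, abs_mul, abs_mul, abs_two,
      show 2 * (φ / 2) / 2 = φ / 2 by ring]
    have := Real.abs_cos_le_one (φ / 2)
    exact mul_le_of_le_one_right (by positivity) this
  rw [Complex.inv_im, Complex.sub_im, him, hn, Complex.one_im, abs_div]
  rcases (abs_nonneg (Real.sin (φ / 2))).eq_or_lt with hb | hb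
  · have : Real.sin φ = 0 := by
      rw [← hb] at hs; simpa using hs
    rw [this]; simp; have := gfun_nonneg φ; positivity
  · rw [show -(0 - Real.exp t * Real.sin φ) = Real.exp t * Real.sin φ by ring, abs_mul, abs_of_pos hE,
      abs_of_pos (by positivity : 0 < 4 * Real.exp t * (|Real.sinh (t / 2)| ^ 2 + |Real.sin (φ / 2)| ^ 2))]
    refine le_trans ?_ (amgm ha hb)
    calc _ ≤ Real.exp t * (2 * |Real.sin (φ / 2)|) / (4 * Real.exp t * (|Real.sinh (t / 2)| ^ 2 + |Real.sin (φ / 2)| ^ 2)) := by gcongr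
      _ = (1 / 2) * (|Real.sin (φ / 2)| / (|Real.sinh (t / 2)| ^ 2 + |Real.sin (φ / 2)| ^ 2)) := by
        field_simp; ring
      _ ≤ _ := by
        have : 0 ≤ |Real.sin (φ / 2)| / (|Real.sinh (t / 2)| ^ 2 + |Real.sin (φ / 2)| ^ 2) := by positivity
        linarith

lemma log_lower {K s : ℝ} (hK : 1 < K) (hs : 0 < s) (hsK : s ≤ K) :
    |s - 1| / K ≤ |Real.log s| := by
  rcases le_total s 1 with h | h
  · rw [abs_of_nonpos (by linarith), abs_of_nonpos (Real.log_nonpos hs.le h)]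
    have := Real.log_le_sub_one_of_pos hs
    have h2 : -(s - 1) / K ≤ -(s - 1) := div_le_self (by linarith) hK.le
    linarith
  · rw [abs_of_nonneg (by linarith), abs_of_nonneg (Real.log_nonneg h)]
    have := Real.one_sub_inv_le_log_of_pos hs
    refine le_trans ?_ this
    rw [show 1 - s⁻¹ = (s - 1) / s by field_simp]
    have : 0 ≤ s - 1 := by linarith
    gcongr

lemma roots_sum {N : ℕ} (hN : 0 < N) {ζ : ℂ} (hζ : IsPrimitiveRoot ζ N) {u : ℂ} (hu : u ^ N ≠ 1) :
    ∑ j ∈ Finset.range N, (1 - ζ ^ j * u)⁻¹ = N * (1 - u ^ N)⁻¹ := by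
  have hu' : 1 - u ^ N ≠ 0 := sub_ne_zero.2 hu.symm
  have h1 : ∀ j ∈ Finset.range N, (1 - ζ ^ j * u)⁻¹ =
      ∑ k ∈ Finset.range N, (ζ ^ k) ^ j * (u ^ k * (1 - u ^ N)⁻¹) := by
    intro j _
    have hp : (ζ ^ j * u) ^ N = u ^ N := by
      rw [mul_pow, ← pow_mul, mul_comm j, pow_mul, hζ.pow_eq_one, one_pow, one_mul]
    have hg := mul_neg_geom_sum (ζ ^ j * u) N
    rw [hp] at hg
    have hne : 1 - ζ ^ j * u ≠ 0 := by
      intro h; rw [h, zero_mul] at hg; exact hu' hg.symm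
    have : ∑ k ∈ Finset.range N, (ζ ^ k) ^ j * (u ^ k * (1 - u ^ N)⁻¹) =
        (∑ k ∈ Finset.range N, (ζ ^ j * u) ^ k) * (1 - u ^ N)⁻¹ := by
      rw [Finset.sum_mul]
      refine Finset.sum_congr rfl fun k _ => ?_
      rw [mul_pow, ← pow_mul, ← pow_mul, mul_comm j]; ring
    rw [this, ← hg]
    have hne2 : ∑ k ∈ Finset.range N, (ζ ^ j * u) ^ k ≠ 0 := by
      intro h; rw [h, mul_zero] at hg; exact hu' hg.symm
    field_simp
  rw [Finset.sum_congr rfl h1, Finset.sum_comm]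
  simp_rw [← Finset.sum_mul]
  rw [Finset.sum_eq_single 0]
  · simp
  · intro k hk hk0
    have hz : ζ ^ k ≠ 1 := hζ.pow_ne_one_of_pos_of_lt hk0 (Finset.mem_range.1 hk)
    rw [geom_sum_eq hz, ← pow_mul, mul_comm k, pow_mul, hζ.pow_eq_one]; simp
  · intro h; simp at h; omega

lemma polar_quot (N : ℕ) {z : ℂ} (hz : z ≠ 0) {ρ β : ℝ} (hρ : 0 < ρ) :
    ((Complex.polarCoord.symm (ρ, β)) / z) ^ N =
      Complex.exp (((N * Real.log (ρ / ‖z‖) : ℝ) : ℂ) + ((N * β - N * z.arg : ℝ) : ℂ) * Complex.I) := by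
  have hr : 0 < ‖z‖ := norm_pos_iff.2 hz
  have h1 : Complex.polarCoord.symm (ρ, β) = ρ * Complex.exp (β * Complex.I) := by
    rw [Complex.polarCoord_symm_apply, Complex.exp_mul_I]; simp
  have h2 : Complex.polarCoord.symm (ρ, β) / z =
      Complex.exp (((Real.log (ρ / ‖z‖) : ℝ) : ℂ) + ((β - z.arg : ℝ) : ℂ) * Complex.I) := by
    rw [Complex.exp_add, ← Complex.ofReal_exp, Real.exp_log (by positivity), h1]
    conv_lhs => rw [← Complex.norm_mul_exp_arg_mul_I z]
    push_cast
    rw [sub_mul, Complex.exp_sub]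
    ring
  rw [h2, ← Complex.exp_nat_mul]
  congr 1
  push_cast; ring

lemma cbound (K : ℝ) (hK : 1 < K) (W : ℂ → ℝ) (R M : ℝ) (N : ℕ) (hR : 0 < R) (hM : 0 ≤ M)
    (hN : 0 < N) (hsupp : ∀ w, W w ≠ 0 → R / K ≤ ‖w‖ ∧ ‖w‖ < R) (hb : ∀ w, |W w| ≤ M)
    (hper : ∀ w, W (Complex.exp (2 * π * Complex.I / N) * w) = W w)
    (z : ℂ) (hz1 : R / K ≤ ‖z‖) (hz2 : ‖z‖ < R)
    (hint : Integrable (fun w => W w * (‖z‖⁻¹ * (z / (z - w)).im))) :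
    |∫ w, W w * (‖z‖⁻¹ * (z / (z - w)).im)| ≤
      K ^ 2 * (∫ φ in (0)..(2 * π), gfun φ) * (∫ τ, hfun τ) * R * M / N := by
  have hK0 : 0 < K := by linarith
  have hr : 0 < ‖z‖ := lt_of_lt_of_le (by positivity) hz1
  have hz : z ≠ 0 := norm_pos_iff.1 hr
  have hNR : (0 : ℝ) < N := by exact_mod_cast hN
  set ζ : ℂ := Complex.exp (2 * π * Complex.I / N) with hζd
  have hζ : IsPrimitiveRoot ζ N := Complex.isPrimitiveRoot_exp N hN.ne'
  have hζn : ‖ζ‖ = 1 := hζ.norm'_eq_one hN.ne'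
  let c : Circle := ⟨ζ, by simp [Submonoid.unitSphere, hζn]⟩
  set G : ℂ → ℝ := fun w => W w * (‖z‖⁻¹ * (z / (z - w)).im) with hG
  have hmp : ∀ j : ℕ, MeasurePreserving (rotation (c ^ j)) := fun j =>
    (rotation (c ^ j)).measurePreserving
  have hrot : ∀ (j : ℕ) (w : ℂ), rotation (c ^ j) w = ζ ^ j * w := by
    intro j w; rw [rotation_apply, Circle.coe_pow]
  have hWj : ∀ (j : ℕ) (w : ℂ), W (ζ ^ j * w) = W w := by
    intro j; induction j with
    | zero => simp
    | succ k ih => intro w; rw [pow_succ', mul_assoc, hper, ih]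
  have hGj : ∀ j : ℕ, ∫ w, G (ζ ^ j * w) = ∫ w, G w := by
    intro j
    have := (hmp j).integral_comp (rotation (c ^ j)).toHomeomorph.measurableEmbedding G
    simp only [hrot] at this
    exact this
  have hGint : ∀ j : ℕ, Integrable (fun w => G (ζ ^ j * w)) := by
    intro j
    have := (hmp j).integrable_comp_of_integrable hint
    simp only [Function.comp_def, hrot] at this
    exact this
  have hav : ∫ w, G w = ∫ w, (N : ℝ)⁻¹ * ∑ j ∈ Finset.range N, G (ζ ^ j * w) := by
    rw [integral_const_mul, integral_finsetSum _ (fun j _ => hGint j)]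
    simp only [hGj]
    simp [hNR.ne']
  have hclosed : ∀ w, ‖w‖ ≠ ‖z‖ → (N : ℝ)⁻¹ * ∑ j ∈ Finset.range N, G (ζ ^ j * w) =
      W w * (‖z‖⁻¹ * ((1 - (w / z) ^ N)⁻¹).im) := by
    intro w hw
    have hu : (w / z) ^ N ≠ 1 := by
      intro h
      have := (IsOfFinOrder.norm_eq_one (isOfFinOrder_iff_pow_eq_one.2 ⟨N, hN, h⟩) : ‖w / z‖ = 1)
      rw [norm_div, div_eq_one_iff_eq hr.ne'] at this
      exact hw this
    have h1 := congrArg Complex.im (roots_sum hN hζ hu)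
    rw [Complex.im_sum, ← Complex.ofReal_natCast, Complex.im_ofReal_mul] at h1
    have h2 : ∀ j, G (ζ ^ j * w) = W w * ‖z‖⁻¹ * ((1 - ζ ^ j * (w / z))⁻¹).im := by
      intro j
      simp only [hG, hWj]
      rw [mul_assoc]; congr 3
      rw [← inv_inj, inv_inv, inv_div]; field_simp
    simp_rw [h2]
    rw [← Finset.mul_sum, h1]
    field_simp
  rw [hav, ← Complex.integral_comp_polarCoord_symm, polarCoord_target,
    Measure.volume_eq_prod, ← Measure.prod_restrict]
  set cc : ℝ := N / (K * ‖z‖) with hcc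
  have hccpos : 0 < cc := by positivity
  have hh0 : Integrable (fun ρ : ℝ => hfun (cc * (ρ - ‖z‖))) :=
    (hfun_integrable.comp_mul_left' hccpos.ne').comp_sub_right ‖z‖
  have hh : Integrable (fun ρ : ℝ => hfun (cc * (ρ - ‖z‖))) (volume.restrict (Set.Ioi 0)) :=
    hh0.integrableOn
  have hg : Integrable (fun β : ℝ => gfun (N * β - N * z.arg)) (volume.restrict (Set.Ioo (-π) π)) := by
    have := gfun_comp_intervalIntegrable N hN (N * z.arg) (-π) π
    rw [intervalIntegrable_iff_integrableOn_Ioo_of_le (by linarith [pi_pos])] at this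
    exact this
  have hbd := (hh.mul_prod hg).const_mul (K * M)
  rw [← Real.norm_eq_abs]
  refine le_trans (norm_integral_le_of_norm_le hbd ?_) ?_
  · have hne : ∀ᵐ p ∂((volume.restrict (Set.Ioi (0:ℝ))).prod (volume.restrict (Set.Ioo (-π) π))), p.1 ≠ ‖z‖ :=
      Measure.quasiMeasurePreserving_fst.ae (ae_restrict_of_ae (Measure.ae_ne volume ‖z‖))
    have hpos : ∀ᵐ p ∂((volume.restrict (Set.Ioi (0:ℝ))).prod (volume.restrict (Set.Ioo (-π) π))), 0 < p.1 :=
      Measure.quasiMeasurePreserving_fst.ae (ae_restrict_mem measurableSet_Ioi)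
    filter_upwards [hne, hpos] with ⟨ρ, β⟩ h1 h2
    simp only at h1 h2 ⊢
    have hnorm : ‖Complex.polarCoord.symm (ρ, β)‖ = ρ := by
      rw [Complex.norm_polarCoord_symm]; exact abs_of_pos h2
    rw [hclosed _ (by rwa [hnorm]), polar_quot N hz h2]
    have hRHS : 0 ≤ K * M * (hfun (cc * (ρ - ‖z‖)) * gfun (N * β - N * z.arg)) := by
      have := hfun_nonneg (cc * (ρ - ‖z‖)); have := gfun_nonneg (N * β - N * z.arg); positivity
    by_cases hW : W (Complex.polarCoord.symm (ρ, β)) = 0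
    · rw [hW]; simpa using hRHS
    obtain ⟨h3, h4⟩ := hsupp _ hW
    rw [hnorm] at h3 h4
    have hquot : 0 < ρ / ‖z‖ := by positivity
    have hquot1 : ρ / ‖z‖ ≠ 1 := by rw [Ne, div_eq_one_iff_eq hr.ne']; exact h1
    have hquotK : ρ / ‖z‖ ≤ K := by
      rw [div_le_iff₀ hr]
      have : R ≤ K * ‖z‖ := by rw [div_le_iff₀ hK0] at hz1; linarith
      linarith
    have hlog := log_lower hK hquot hquotK
    have ht : (N : ℝ) * Real.log (ρ / ‖z‖) ≠ 0 :=
      mul_ne_zero hNR.ne' (Real.log_ne_zero_of_pos_of_ne_one hquot hquot1)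
    have hk := kernel_bound (φ := N * β - N * z.arg) ht
    have hτ : |cc * (ρ - ‖z‖)| ≤ |(N : ℝ) * Real.log (ρ / ‖z‖)| := by
      rw [abs_mul (N : ℝ), abs_of_pos hNR]
      have : cc * (ρ - ‖z‖) = N * ((ρ / ‖z‖ - 1) / K) := by rw [hcc]; field_simp
      rw [this, abs_mul, abs_of_pos hNR, abs_div, abs_of_pos hK0]
      gcongr
    have hs := sinh_hfun (mul_ne_zero hccpos.ne' (sub_ne_zero.2 h1)) hτ
    have hfin := hk.trans (mul_le_mul_of_nonneg_right hs (gfun_nonneg _))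
    rw [smul_eq_mul, Real.norm_eq_abs, abs_mul, abs_mul, abs_mul, abs_of_pos h2, abs_of_pos (inv_pos.2 hr)]
    have hrr : ρ * ‖z‖⁻¹ ≤ K := by rwa [← div_eq_mul_inv]
    calc _ = (ρ * ‖z‖⁻¹) * |W (Complex.polarCoord.symm (ρ, β))| * |((1 - Complex.exp (((N * Real.log (ρ / ‖z‖) : ℝ) : ℂ) + ((N * β - N * z.arg : ℝ) : ℂ) * Complex.I))⁻¹).im| := by ring
      _ ≤ K * M * (hfun (cc * (ρ - ‖z‖)) * gfun (N * β - N * z.arg)) := by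
        gcongr
        exact hb _
  · rw [integral_const_mul, integral_prod_mul (fun ρ => hfun (cc * (ρ - ‖z‖))) (fun β => gfun (N * β - N * z.arg))]
    have e1 : ∫ β in Set.Ioo (-π) π, gfun (N * β - N * z.arg) = ∫ φ in (0)..(2 * π), gfun φ := by
      rw [← gfun_comp_integral N hN (N * z.arg), intervalIntegral.integral_of_le (by linarith [pi_pos]),
        integral_Ioc_eq_integral_Ioo]
    have e2 : ∫ ρ in Set.Ioi 0, hfun (cc * (ρ - ‖z‖)) ≤ cc⁻¹ * ∫ τ, hfun τ := by
      refine (setIntegral_le_integral hh0 (Filter.Eventually.of_forall fun x => hfun_nonneg _)).trans ?_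
      rw [integral_sub_right_eq_self (fun ρ => hfun (cc * ρ)) ‖z‖, Measure.integral_comp_mul_left,
        abs_of_pos (inv_pos.2 hccpos)]
      rfl
    have hA : 0 ≤ ∫ φ in (0)..(2 * π), gfun φ :=
      intervalIntegral.integral_nonneg (by positivity) (fun x _ => gfun_nonneg x)
    have hH : 0 ≤ ∫ τ, hfun τ := integral_nonneg hfun_nonneg
    rw [e1]
    have e3 : cc⁻¹ ≤ K * R / N := by
      rw [hcc, inv_div]; gcongr
    calc _ ≤ K * M * ((K * R / N * ∫ τ, hfun τ) * ∫ φ in (0)..(2 * π), gfun φ) := by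
          gcongr
          exact e2.trans (by gcongr)
      _ = _ := by ring

/-- For `ω ∈ L^∞` supported in `B(0,R) \ B(0,R/K)` and `2π/N`-periodic in the angle,
`‖v_r[ω]‖_{L^∞(Ω)} ≤ C_K R ‖ω‖_{L^∞} N⁻¹ log N`. -/
theorem vrad_Linf_of_angular_periodic (K : ℝ) (hK : 1 < K) :
    ∃ C : ℝ, 0 < C ∧
      ∀ (ω : EuclideanSpace ℝ (Fin 2) → ℝ) (R M : ℝ) (N : ℕ),
        0 < R → 0 ≤ M → 2 ≤ N →
        Function.support ω ⊆ Metric.ball 0 R \ Metric.ball 0 (R / K) →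
        (∀ x, |ω x| ≤ M) →
        (∀ x, ω (rot (2 * π / N) x) = ω x) →
        ∀ x ∈ Metric.ball (0 : EuclideanSpace ℝ (Fin 2)) R \ Metric.ball 0 (R / K),
          |vrad ω x| ≤ C * R * M * Real.log N / N := by
  have hA : 0 ≤ ∫ φ in (0)..(2 * π), gfun φ :=
    intervalIntegral.integral_nonneg (by positivity) (fun x _ => gfun_nonneg x)
  have hH : 0 ≤ ∫ τ, hfun τ := integral_nonneg hfun_nonneg
  have hl2 : 0 < Real.log 2 := Real.log_pos (by norm_num)
  refine ⟨(K ^ 2 * (∫ φ in (0)..(2 * π), gfun φ) * (∫ τ, hfun τ) + 1) / Real.log 2, by positivity, ?_⟩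
  set C0 := K ^ 2 * (∫ φ in (0)..(2 * π), gfun φ) * (∫ τ, hfun τ) with hC0
  have hC0' : 0 ≤ C0 := by positivity
  intro ω R M N hR hM hN hsupp hb hper x hx
  have hNR : (0 : ℝ) < N := by positivity
  have hlog : Real.log 2 ≤ Real.log N := Real.log_le_log (by norm_num) (by exact_mod_cast hN)
  have hlogp : 0 < Real.log N := hl2.trans_le hlog
  have hkey : |vrad ω x| ≤ C0 * R * M / N := by
    by_cases hi : Integrable (fun y => (ω y / ‖x - y‖ ^ 2) • perp (x - y))
    swap
    · rw [vrad, biotSavart, integral_undef hi]; simp; positivity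
    let e := Complex.orthonormalBasisOneI.repr
    obtain ⟨z, rfl⟩ : ∃ z, e z = x := e.surjective x
    have e0 : ∀ w, e w 0 = w.re := fun w => by simp [e]
    have e1 : ∀ w, e w 1 = w.im := fun w => by simp [e]
    have hmp : MeasurePreserving e := e.measurePreserving
    have hpt : ∀ w, ⟪‖e z‖⁻¹ • e z, (ω (e w) / ‖e z - e w‖ ^ 2) • perp (e z - e w)⟫ =
        ω (e w) * (‖z‖⁻¹ * (z / (z - w)).im) := by
      intro w
      rw [← map_sub, e.norm_map, e.norm_map, inner_smul_left, inner_smul_right]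
      have : ⟪e z, perp (e (z - w))⟫ = z.im * (z - w).re - z.re * (z - w).im := by
        simp only [PiLp.inner_apply, Fin.sum_univ_two, perp, WithLp.equiv_symm_apply]
        simp [e0, e1]
        ring
      rw [this, Complex.div_im, Complex.normSq_eq_norm_sq]
      simp
      ring
    have hi2 := hi.const_inner (𝕜 := ℝ) (‖e z‖⁻¹ • e z)
    have hv : vrad ω (e z) = ∫ w, ω (e w) * (‖z‖⁻¹ * (z / (z - w)).im) := by
      rw [vrad, biotSavart, ← integral_inner hi]
      rw [← hmp.integral_comp e.toHomeomorph.measurableEmbedding]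
      simp only [hpt]
    have hi3 := hmp.integrable_comp_of_integrable hi2
    simp only [Function.comp_def, hpt] at hi3
    rw [hv]
    simp only [Set.mem_sdiff, Metric.mem_ball, dist_zero_right, e.norm_map, not_lt] at hx
    refine cbound K hK (fun w => ω (e w)) R M N hR hM (by omega) ?_ (fun w => hb _) ?_ z hx.2 hx.1 hi3
    · intro w hw
      have := hsupp hw
      simp only [Set.mem_sdiff, Metric.mem_ball, dist_zero_right, e.norm_map, not_lt] at this
      exact ⟨this.2, this.1⟩
    · intro w
      have : e (Complex.exp (2 * π * Complex.I / N) * w) = rot (2 * π / N) (e w) := by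
        have h : Complex.exp (2 * π * Complex.I / N) = Real.cos (2 * π / N) + Real.sin (2 * π / N) * Complex.I := by
          rw [Complex.ofReal_cos, Complex.ofReal_sin, ← Complex.exp_mul_I]; congr 1; push_cast; ring
        have hre : (Complex.exp (2 * π * Complex.I / N)).re = Real.cos (2 * π / N) := by
          rw [h, Complex.add_re, Complex.ofReal_re, Complex.re_ofReal_mul]; simp
        have him : (Complex.exp (2 * π * Complex.I / N)).im = Real.sin (2 * π / N) := by
          rw [h, Complex.add_im, Complex.ofReal_im, Complex.im_ofReal_mul]; simp
        ext i
        fin_cases i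
        · change e _ 0 = _
          rw [e0, Complex.mul_re, hre, him]; simp [rot, e0, e1]
        · change e _ 1 = _
          rw [e1, Complex.mul_im, hre, him]; simp [rot, e0, e1]; ring
      change ω _ = ω _
      rw [this, hper]
  refine hkey.trans ?_
  refine div_le_div_of_nonneg_right ?_ hNR.le
  have : 1 ≤ Real.log N / Real.log 2 := by rwa [one_le_div hl2]
  have h2 : 0 ≤ R * M := by positivity
  calc C0 * R * M ≤ (C0 + 1) * (R * M) := by nlinarith
    _ ≤ (C0 + 1) * (R * M) * (Real.log N / Real.log 2) := le_mul_of_one_le_right (by positivity) this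
    _ = _ := by ring
end

section
/- Let ε ∈ (0,1), δ ∈ (0,ε), and f ∈ C²([1/2,4]) with f' > 0 on [1/2,4]. There exist constants C, K₀ ≥ 1 such that for every g ∈ C²_c((1/2,4)), every K ≥ K₀, every N ∈ ℕ, and every f_err ∈ C¹([1/2,4]) with ‖f_err‖_{C¹} ≤ K^{1−ε}, the function ω_K(r,α) := g(r)cos(Nα − K f(r) + f_err(r)) (viewed as a function on ℝ² in polar coordinates) satisfies ‖ω_K‖_{Ḣ^{−δ}(ℝ²)} ≤ C K^{−δ} ‖g‖_{C¹}. -/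
open MeasureTheory Real

/-- The normalizing constant `γ(δ) = π 2^δ Γ(δ/2)/Γ(1−δ/2)` of the Riesz potential. -/
noncomputable def rieszGamma (δ : ℝ) : ℝ :=
  π * 2 ^ δ * Real.Gamma (δ / 2) / Real.Gamma (1 - δ / 2)

/-- The Riesz potential `Λ^{−δ} h (x) = γ(δ)⁻¹ ∫ h(y)/|x−y|^{2−δ} dy` on `ℝ²`. -/
noncomputable def rieszPot (δ : ℝ) (h : EuclideanSpace ℝ (Fin 2) → ℝ)
    (x : EuclideanSpace ℝ (Fin 2)) : ℝ :=
  (rieszGamma δ)⁻¹ * ∫ y, h y / ‖x - y‖ ^ (2 - δ)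

/-- The polar angle of a point of `ℝ²`. -/
noncomputable def polarAngle (x : EuclideanSpace ℝ (Fin 2)) : ℝ :=
  Complex.arg (x 0 + x 1 * Complex.I)

noncomputable def Hs (δ s ρ : ℝ) : ℝ := min (ρ ^ (δ - 2)) (s * ρ ^ (δ - 3))

lemma Hs_nonneg {δ s ρ : ℝ} (hs : 0 ≤ s) (hρ : 0 ≤ ρ) : 0 ≤ Hs δ s ρ := by
  unfold Hs; positivity

lemma sq_rpow_half {ρ : ℝ} (hρ : 0 ≤ ρ) (a : ℝ) : (ρ ^ 2) ^ (a / 2) = ρ ^ a := by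
  rw [← Real.rpow_natCast ρ 2, ← Real.rpow_mul hρ]; congr 1; push_cast; ring

lemma ks_le {δ s ρ : ℝ} (hδ1 : δ < 1) (hρ : 0 < ρ) :
    (ρ ^ 2 + s ^ 2) ^ ((δ - 2) / 2) ≤ ρ ^ (δ - 2) := by
  rw [← sq_rpow_half hρ.le]
  exact Real.rpow_le_rpow_of_nonpos (by positivity) (by nlinarith) (by linarith)

lemma kdiff_le {δ s ρ : ℝ} (hδ0 : 0 < δ) (hδ1 : δ < 1) (hs : 0 < s) (hρ : 0 < ρ) :
    ρ ^ (δ - 2) - (ρ ^ 2 + s ^ 2) ^ ((δ - 2) / 2) ≤ Hs δ s ρ := by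
  unfold Hs
  have h0 : 0 < ρ ^ (δ - 2) := by positivity
  refine le_min ?_ ?_
  · have : 0 ≤ (ρ ^ 2 + s ^ 2) ^ ((δ - 2) / 2) := by positivity
    linarith
  · have hS : 0 < ρ ^ 2 + s ^ 2 := by positivity
    set q := ρ ^ 2 / (ρ ^ 2 + s ^ 2) with hq
    have hq0 : 0 < q := by positivity
    have hq1 : q ≤ 1 := by rw [hq, div_le_one hS]; nlinarith
    have e1 : (ρ ^ 2 + s ^ 2) ^ ((δ - 2) / 2) = ρ ^ (δ - 2) * q ^ ((2 - δ) / 2) := by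
      rw [hq, Real.div_rpow (by positivity) hS.le, sq_rpow_half hρ.le,
        show (δ - 2) / 2 = -((2 - δ) / 2) by ring, Real.rpow_neg hS.le,
        show δ - 2 = -(2 - δ) by ring, Real.rpow_neg hρ.le]
      have : ρ ^ (2 - δ) ≠ 0 := by positivity
      field_simp
    have e2 : q ≤ q ^ ((2 - δ) / 2) := by
      conv_lhs => rw [← Real.rpow_one q]
      exact Real.rpow_le_rpow_of_exponent_ge hq0 hq1 (by linarith)
    have e3 : ρ ^ (δ - 3) = ρ ^ (δ - 2) / ρ := by
      rw [← Real.rpow_sub_one hρ.ne']; congr 1; ring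
    have e4 : 1 - q ≤ s / ρ := by
      rw [hq, one_sub_div hS.ne', div_le_div_iff₀ hS hρ]
      nlinarith [mul_pos hs hρ, mul_pos (mul_pos hs hρ) hρ, mul_nonneg hs.le (sq_nonneg (s-ρ)), pow_pos hs 3]
    rw [e1, e3]
    calc _ = ρ ^ (δ - 2) * (1 - q ^ ((2 - δ) / 2)) := by ring
      _ ≤ ρ ^ (δ - 2) * (s / ρ) := by
        apply mul_le_mul_of_nonneg_left _ h0.le; linarith
      _ = _ := by ring

lemma kgrad_le {δ s ρ : ℝ} (hδ1 : δ < 1) (hs : 0 < s) (hρ : 0 ≤ ρ) :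
    s * ρ * (ρ ^ 2 + s ^ 2) ^ ((δ - 2) / 2 - 1) ≤ Hs δ s ρ := by
  rcases hρ.eq_or_lt with h | hρ
  · subst h
    simpa using Hs_nonneg hs.le le_rfl
  have hS : 0 < ρ ^ 2 + s ^ 2 := by positivity
  unfold Hs
  refine le_min ?_ ?_
  · refine le_trans ?_ (ks_le (s := s) hδ1 hρ)
    rw [Real.rpow_sub_one hS.ne', ← mul_div_assoc, div_le_iff₀ hS, mul_comm]
    apply mul_le_mul_of_nonneg_left _ (by positivity)
    nlinarith [sq_nonneg (s - ρ), mul_pos hs hρ]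
  · have : (ρ ^ 2 + s ^ 2) ^ ((δ - 2) / 2 - 1) ≤ (ρ ^ 2) ^ ((δ - 4) / 2) := by
      rw [show (δ - 2) / 2 - 1 = (δ - 4) / 2 by ring]
      exact Real.rpow_le_rpow_of_nonpos (by positivity) (by nlinarith) (by linarith)
    rw [sq_rpow_half hρ.le] at this
    have e : ρ ^ (δ - 3) = ρ * ρ ^ (δ - 4) := by
      rw [mul_comm, ← Real.rpow_add_one hρ.ne']; congr 1; ring
    rw [e, mul_assoc]
    gcongr

lemma Hs_scale {δ s ρ : ℝ} (hs : 0 < s) (hρ : 0 ≤ ρ) :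
    Hs δ s ρ = s ^ (δ - 2) * Hs δ 1 (s⁻¹ * ρ) := by
  unfold Hs
  rw [mul_min_of_nonneg _ _ (by positivity), Real.mul_rpow (by positivity) hρ,
    Real.mul_rpow (by positivity) hρ, Real.inv_rpow hs.le, Real.inv_rpow hs.le]
  have h3 : s ^ (δ - 2) = s * s ^ (δ - 3) := by
    rw [mul_comm, ← Real.rpow_add_one hs.ne']; congr 1; ring
  have : s ^ (δ - 3) ≠ 0 := by positivity
  congr 1
  · field_simp
  · rw [h3]; field_simp

lemma Hs_one_integrable {δ : ℝ} (hδ0 : 0 < δ) (hδ1 : δ < 1) :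
    Integrable (fun z : ℂ => Hs δ 1 ‖z‖) := by
  rw [integrable_fun_norm_addHaar volume (f := Hs δ 1)]
  simp only [Complex.finrank_real_complex]
  have hm : Measurable (fun y : ℝ => y ^ (2 - 1) • Hs δ 1 y) := by
    unfold Hs; fun_prop
  rw [← Set.Ioc_union_Ioi_eq_Ioi (zero_le_one' ℝ)]
  refine IntegrableOn.union ?_ ?_
  · have : IntegrableOn (fun y : ℝ => y ^ (δ - 1)) (Set.Ioc 0 1) :=
      (intervalIntegrable_iff_integrableOn_Ioc_of_le zero_le_one).1
        (intervalIntegral.intervalIntegrable_rpow' (by linarith))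
    refine Integrable.mono' this hm.aestronglyMeasurable ?_
    refine (ae_restrict_mem measurableSet_Ioc).mono fun y hy => ?_
    have hy0 : 0 < y := hy.1
    have := Hs_nonneg (δ := δ) zero_le_one hy0.le
    rw [Real.norm_of_nonneg (by simp only [smul_eq_mul]; positivity)]
    have : Hs δ 1 y ≤ y ^ (δ - 2) := min_le_left _ _
    have e : y ^ (δ - 1) = y * y ^ (δ - 2) := by
      rw [mul_comm, ← Real.rpow_add_one hy0.ne']; congr 1; ring
    rw [e]; simpa using mul_le_mul_of_nonneg_left this hy0.le
  · have : IntegrableOn (fun y : ℝ => y ^ (δ - 2)) (Set.Ioi 1) :=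
      integrableOn_Ioi_rpow_of_lt (by linarith) one_pos
    refine Integrable.mono' this hm.aestronglyMeasurable ?_
    refine (ae_restrict_mem measurableSet_Ioi).mono fun y hy => ?_
    have hy0 : 0 < y := lt_trans one_pos hy
    have := Hs_nonneg (δ := δ) zero_le_one hy0.le
    rw [Real.norm_of_nonneg (by simp only [smul_eq_mul]; positivity)]
    have : Hs δ 1 y ≤ 1 * y ^ (δ - 3) := min_le_right _ _
    have e : y ^ (δ - 2) = y * (1 * y ^ (δ - 3)) := by
      rw [one_mul, mul_comm, ← Real.rpow_add_one hy0.ne']; congr 1; ring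
    rw [e]; simpa using mul_le_mul_of_nonneg_left this hy0.le

lemma Hs_fun_eq {δ s : ℝ} (hs : 0 < s) :
    (fun z : ℂ => Hs δ s ‖z‖) = fun z : ℂ => s ^ (δ - 2) * Hs δ 1 ‖s⁻¹ • z‖ := by
  ext z
  rw [Hs_scale hs (norm_nonneg z), norm_smul, Real.norm_of_nonneg (by positivity)]

lemma Hs_integrable {δ s : ℝ} (hδ0 : 0 < δ) (hδ1 : δ < 1) (hs : 0 < s) :
    Integrable (fun z : ℂ => Hs δ s ‖z‖) := by
  rw [Hs_fun_eq hs]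
  exact ((Hs_one_integrable hδ0 hδ1).comp_smul (inv_ne_zero hs.ne')).const_mul _

lemma Hs_lintegral {δ s : ℝ} (hδ0 : 0 < δ) (hδ1 : δ < 1) (hs : 0 < s) :
    ∫⁻ z : ℂ, ENNReal.ofReal (Hs δ s ‖z‖) =
      ENNReal.ofReal (s ^ δ * ∫ z : ℂ, Hs δ 1 ‖z‖) := by
  rw [← ofReal_integral_eq_lintegral_ofReal (Hs_integrable hδ0 hδ1 hs)
    (Filter.Eventually.of_forall fun z => Hs_nonneg hs.le (norm_nonneg z)), Hs_fun_eq hs,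
    integral_const_mul, Measure.integral_comp_inv_smul volume (fun z : ℂ => Hs δ 1 ‖z‖)]
  congr 1
  rw [Complex.finrank_real_complex, abs_of_pos (by positivity), smul_eq_mul, ← mul_assoc]
  congr 1
  rw [← Real.rpow_natCast, ← Real.rpow_add hs]; congr 1; push_cast; ring

/-- The majorant. -/
lemma majorant_bound {δ : ℝ} (hδ0 : 0 < δ) (hδ1 : δ < 1) :
    ∃ C : ℝ, 0 ≤ C ∧ ∀ (ε K : ℝ) (w : ℂ), δ < ε → 1 ≤ K →
      ∫⁻ z in Metric.ball (0 : ℂ) 4, ENNReal.ofReal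
        (Hs δ K⁻¹ ‖w - z‖ + K ^ (-ε) * ‖w - z‖ ^ (δ - 2)) ≤
      ENNReal.ofReal (C * K ^ (-δ) * (1 + ‖w‖) ^ (δ - 2)) := by
  set I := ∫ z : ℂ, Hs δ 1 ‖z‖ with hI
  have hI0 : 0 ≤ I := integral_nonneg fun z => Hs_nonneg zero_le_one (norm_nonneg z)
  set V := (volume (Metric.ball (0 : ℂ) 4)).toReal with hV
  have hV0 : 0 ≤ V := ENNReal.toReal_nonneg
  refine ⟨81 * (I + 12 ^ δ * I) + V * 32, by positivity, fun ε K w hε hK => ?_⟩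
  have hK0 : 0 < K := by linarith
  have hKe : K ^ (-ε) ≤ K ^ (-δ) := Real.rpow_le_rpow_of_exponent_le hK (by linarith)
  have hKd : 0 < K ^ (-δ) := by positivity
  have hw0 := norm_nonneg w
  have hwp : 0 < (1 + ‖w‖) ^ (δ - 2) := by positivity
  rcases le_or_gt ‖w‖ 8 with hw | hw
  · calc _ ≤ ∫⁻ z in Metric.ball (0 : ℂ) 4, (ENNReal.ofReal (Hs δ K⁻¹ ‖w - z‖) +
          ENNReal.ofReal (K ^ (-δ)) * ENNReal.ofReal (Hs δ 12 ‖w - z‖)) := by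
          refine setLIntegral_mono' measurableSet_ball fun z hz => ?_
          rw [← ENNReal.ofReal_mul hKd.le, ← ENNReal.ofReal_add (Hs_nonneg (by positivity) (norm_nonneg _)) (mul_nonneg hKd.le (Hs_nonneg (by norm_num) (norm_nonneg _)))]
          apply ENNReal.ofReal_le_ofReal
          gcongr
          rcases (norm_nonneg (w - z)).eq_or_lt with h | h
          · rw [← h, Real.zero_rpow (by linarith)]; exact Hs_nonneg (by norm_num) le_rfl
          unfold Hs
          refine le_min le_rfl ?_
          have hz' : ‖w - z‖ ≤ 12 := by
            have := norm_sub_le w z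
            have : ‖z‖ < 4 := by simpa using hz
            linarith
          have e : ‖w - z‖ ^ (δ - 2) = ‖w - z‖ * ‖w - z‖ ^ (δ - 3) := by
            rw [mul_comm, ← Real.rpow_add_one h.ne']; congr 1; ring
          rw [e]; gcongr
      _ ≤ ∫⁻ z : ℂ, (ENNReal.ofReal (Hs δ K⁻¹ ‖w - z‖) +
          ENNReal.ofReal (K ^ (-δ)) * ENNReal.ofReal (Hs δ 12 ‖w - z‖)) := setLIntegral_le_lintegral _ _
      _ = ENNReal.ofReal (K ^ (-δ) * I) + ENNReal.ofReal (K ^ (-δ)) * ENNReal.ofReal (12 ^ δ * I) := by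
          rw [lintegral_add_left (by unfold Hs; fun_prop), lintegral_const_mul _ (by unfold Hs; fun_prop),
            lintegral_sub_left_eq_self (fun z : ℂ => ENNReal.ofReal (Hs δ K⁻¹ ‖z‖)) w,
            lintegral_sub_left_eq_self (fun z : ℂ => ENNReal.ofReal (Hs δ 12 ‖z‖)) w,
            Hs_lintegral hδ0 hδ1 (by positivity), Hs_lintegral hδ0 hδ1 (by norm_num),
            Real.inv_rpow hK0.le, Real.rpow_neg hK0.le]
      _ = ENNReal.ofReal (K ^ (-δ) * (I + 12 ^ δ * I)) := by
          rw [← ENNReal.ofReal_mul hKd.le, ← ENNReal.ofReal_add (by positivity) (by positivity)]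
          congr 1; ring
      _ ≤ _ := by
          apply ENNReal.ofReal_le_ofReal
          have h81 : 1 ≤ 81 * (1 + ‖w‖) ^ (δ - 2) := by
            have h1 : (9:ℝ) ^ (δ - 2) ≤ (1 + ‖w‖) ^ (δ - 2) :=
              Real.rpow_le_rpow_of_nonpos (by positivity) (by linarith) (by linarith)
            have h2 : (9:ℝ) ^ (-2 : ℝ) ≤ 9 ^ (δ - 2) :=
              Real.rpow_le_rpow_of_exponent_le (by norm_num) (by linarith)
            rw [Real.rpow_neg (by norm_num)] at h2
            norm_num at h2
            linarith
          set J := I + 12 ^ δ * I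
          have hJ : 0 ≤ K ^ (-δ) * J := by positivity
          have : 0 ≤ V * 32 * K ^ (-δ) * (1 + ‖w‖) ^ (δ - 2) := by positivity
          nlinarith [mul_le_mul_of_nonneg_left h81 hJ]
  · calc _ ≤ ∫⁻ z in Metric.ball (0 : ℂ) 4, ENNReal.ofReal (32 * K ^ (-δ) * (1 + ‖w‖) ^ (δ - 2)) := by
          refine setLIntegral_mono' measurableSet_ball fun z hz => ?_
          apply ENNReal.ofReal_le_ofReal
          have hz' : (1 + ‖w‖) / 4 ≤ ‖w - z‖ := by
            have := norm_sub_norm_le w z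
            have : ‖z‖ < 4 := by simpa using hz
            linarith
          have h1 : 1 ≤ ‖w - z‖ := by linarith
          have hA : ‖w - z‖ ^ (δ - 2) ≤ 16 * (1 + ‖w‖) ^ (δ - 2) := by
            have h1 : ‖w - z‖ ^ (δ - 2) ≤ ((1 + ‖w‖) / 4) ^ (δ - 2) :=
              Real.rpow_le_rpow_of_nonpos (by positivity) hz' (by linarith)
            rw [Real.div_rpow (by positivity) (by norm_num)] at h1
            have h2 : (4:ℝ) ^ (-2 : ℝ) ≤ 4 ^ (δ - 2) :=
              Real.rpow_le_rpow_of_exponent_le (by norm_num) (by linarith)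
            rw [Real.rpow_neg (by norm_num)] at h2
            norm_num at h2
            refine h1.trans ?_
            rw [div_le_iff₀ (by positivity)]
            nlinarith
          have hB : Hs δ K⁻¹ ‖w - z‖ ≤ K ^ (-δ) * ‖w - z‖ ^ (δ - 2) := by
            refine (min_le_right _ _).trans ?_
            gcongr ?_ * ?_
            · rw [← Real.rpow_neg_one]
              exact Real.rpow_le_rpow_of_exponent_le hK (by linarith)
            · exact Real.rpow_le_rpow_of_exponent_le h1 (by linarith)
          have hC : K ^ (-ε) * ‖w - z‖ ^ (δ - 2) ≤ K ^ (-δ) * ‖w - z‖ ^ (δ - 2) := by gcongr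
          nlinarith [mul_le_mul_of_nonneg_left hA hKd.le]
      _ = ENNReal.ofReal (32 * K ^ (-δ) * (1 + ‖w‖) ^ (δ - 2)) * ENNReal.ofReal V := by
          rw [setLIntegral_const, hV, ENNReal.ofReal_toReal measure_ball_lt_top.ne]
      _ = ENNReal.ofReal (V * 32 * K ^ (-δ) * (1 + ‖w‖) ^ (δ - 2)) := by
          rw [← ENNReal.ofReal_mul (by positivity)]; congr 1; ring
      _ ≤ _ := by
          apply ENNReal.ofReal_le_ofReal
          gcongr
          have : 0 ≤ 81 * (I + 12 ^ δ * I) := by positivity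
          linarith

lemma ibp {f f1 f2 ferr e1 g g1 k k1 : ℝ → ℝ} {c M L K Cg θ : ℝ}
    (hc : 0 < c) (hL : 0 ≤ L) (hK : 0 < K)
    (hfc : ContinuousOn f (Set.Icc (1 / 2) 4)) (hf1c : ContinuousOn f1 (Set.Icc (1 / 2) 4))
    (hf2c : ContinuousOn f2 (Set.Icc (1 / 2) 4)) (hec : ContinuousOn ferr (Set.Icc (1 / 2) 4))
    (he1c : ContinuousOn e1 (Set.Icc (1 / 2) 4)) (hgc : Continuous g) (hg1c : Continuous g1)
    (hkc : Continuous k) (hk1c : Continuous k1)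
    (hfd : ∀ r ∈ Set.Ioo (1 / 2 : ℝ) 4, HasDerivAt f (f1 r) r)
    (hf1d : ∀ r ∈ Set.Ioo (1 / 2 : ℝ) 4, HasDerivAt f1 (f2 r) r)
    (hed : ∀ r ∈ Set.Ioo (1 / 2 : ℝ) 4, HasDerivAt ferr (e1 r) r)
    (hgd : ∀ r, HasDerivAt g (g1 r) r) (hkd : ∀ r, HasDerivAt k (k1 r) r)
    (hf1 : ∀ r ∈ Set.Icc (1 / 2 : ℝ) 4, c ≤ f1 r) (hf2 : ∀ r ∈ Set.Icc (1 / 2 : ℝ) 4, |f2 r| ≤ M)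
    (he1 : ∀ r ∈ Set.Icc (1 / 2 : ℝ) 4, |e1 r| ≤ L)
    (hgb : ∀ r, |g r| + |g1 r| ≤ Cg) (hk0 : ∀ r, 0 ≤ k r)
    (hga : g (1 / 2) = 0) (hgb4 : g 4 = 0) :
    |∫ r in (1 / 2 : ℝ)..4, r * (g r * Real.cos (θ - K * f r + ferr r) * k r)| ≤
      (4 / c + 4 * M / c ^ 2) * Cg * (K⁻¹ * ∫ r in (1 / 2 : ℝ)..4, ((1 + L) * k r + |k1 r|)) := by
  have h12 : (1 / 2 : ℝ) ≤ 4 := by norm_num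
  have hCg : 0 ≤ Cg := (add_nonneg (abs_nonneg _) (abs_nonneg _)).trans (hgb 0)
  have hM : 0 ≤ M := (abs_nonneg _).trans (hf2 1 (by norm_num))
  have hne : ∀ r ∈ Set.Icc (1 / 2 : ℝ) 4, f1 r ≠ 0 := fun r hr => (hc.trans_le (hf1 r hr)).ne'
  set Φ : ℝ → ℝ := fun r => θ - K * f r + ferr r with hΦ
  have hΦc : ContinuousOn Φ (Set.Icc (1 / 2) 4) := by fun_prop
  set A : ℝ → ℝ := fun r => k r * (g r * r) / f1 r with hA
  set A1 : ℝ → ℝ := fun r => ((k1 r * (g r * r) + k r * (g1 r * r + g r * 1)) * f1 r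
    - k r * (g r * r) * f2 r) / f1 r ^ 2 with hA1
  have hAc : ContinuousOn A (Set.Icc (1 / 2) 4) := by
    apply ContinuousOn.div _ hf1c hne; fun_prop
  have hA1c : ContinuousOn A1 (Set.Icc (1 / 2) 4) := by
    apply ContinuousOn.div (by fun_prop) (by fun_prop) (fun r hr => pow_ne_zero 2 (hne r hr))
  have hΦd : ∀ r ∈ Set.Ioo (1 / 2 : ℝ) 4, HasDerivAt Φ (-(K * f1 r) + e1 r) r := fun r hr => by
    have := (((hfd r hr).const_mul K).const_sub θ).add (hed r hr)
    exact this
  have hAd : ∀ r ∈ Set.Ioo (1 / 2 : ℝ) 4, HasDerivAt A (A1 r) r := fun r hr =>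
    ((hkd r).mul ((hgd r).mul (hasDerivAt_id r))).div (hf1d r hr) (hne r (Set.Ioo_subset_Icc_self hr))
  set P : ℝ → ℝ := fun r => A1 r * Real.sin (Φ r) + A r * e1 r * Real.cos (Φ r) with hP
  set Q : ℝ → ℝ := fun r => r * (g r * Real.cos (Φ r) * k r) with hQ
  have hPc : ContinuousOn P (Set.Icc (1 / 2) 4) := by
    apply ContinuousOn.add
    · exact hA1c.mul (Real.continuous_sin.comp_continuousOn hΦc)
    · exact (hAc.mul he1c).mul (Real.continuous_cos.comp_continuousOn hΦc)
  have hQc : ContinuousOn Q (Set.Icc (1 / 2) 4) := by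
    have := Real.continuous_cos.comp_continuousOn hΦc
    exact continuousOn_id.mul ((hgc.continuousOn.mul this).mul hkc.continuousOn)
  have hPi : IntervalIntegrable P volume (1 / 2) 4 := by
    apply ContinuousOn.intervalIntegrable; rwa [Set.uIcc_of_le h12]
  have hQi : IntervalIntegrable Q volume (1 / 2) 4 := by
    apply ContinuousOn.intervalIntegrable; rwa [Set.uIcc_of_le h12]
  have key : ∫ r in (1 / 2 : ℝ)..4, (P r - K * Q r) = 0 := by
    rw [intervalIntegral.integral_eq_sub_of_hasDerivAt_of_le (f := fun r => A r * Real.sin (Φ r)) h12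
      (hAc.mul (Real.continuous_sin.comp_continuousOn hΦc)) ?_ (hPi.sub (hQi.const_mul K))]
    · simp only [hA, hga, hgb4]; simp
    · intro r hr
      have h := (hAd r hr).mul ((hΦd r hr).sin)
      refine h.congr_deriv ?_
      have hh : A r * f1 r = k r * (g r * r) :=
        div_mul_cancel₀ _ (hne r (Set.Ioo_subset_Icc_self hr))
      show A1 r * Real.sin (Φ r) + A r * (Real.cos (Φ r) * (-(K * f1 r) + e1 r)) =
        (A1 r * Real.sin (Φ r) + A r * e1 r * Real.cos (Φ r)) - K * (r * (g r * Real.cos (Φ r) * k r))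
      linear_combination (-K * Real.cos (Φ r)) * hh
  rw [intervalIntegral.integral_sub hPi (hQi.const_mul K), intervalIntegral.integral_const_mul,
    sub_eq_zero] at key
  have e : ∫ r in (1 / 2 : ℝ)..4, Q r = K⁻¹ * ∫ r in (1 / 2 : ℝ)..4, P r := by
    rw [key]; field_simp
  rw [e, abs_mul, abs_of_pos (inv_pos.2 hK), mul_left_comm]
  refine mul_le_mul_of_nonneg_left ?_ (inv_pos.2 hK).le
  rw [← intervalIntegral.integral_const_mul]
  refine (intervalIntegral.abs_integral_le_integral_abs h12).trans ?_
  refine intervalIntegral.integral_mono_on h12 hPi.abs (Continuous.intervalIntegrable (by fun_prop) _ _) ?_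
  intro r hr
  have hf1p : 0 < f1 r := hc.trans_le (hf1 r hr)
  have hr0 : 0 < r := by linarith [hr.1]
  have hgr : |g r| ≤ Cg := by linarith [hgb r, abs_nonneg (g1 r)]
  have hif : (f1 r)⁻¹ ≤ c⁻¹ := inv_anti₀ hc (hf1 r hr)
  have hif0 : 0 ≤ (f1 r)⁻¹ := by positivity
  have b1 : |g r * r / f1 r| ≤ 4 * Cg / c := by
    rw [abs_div, abs_mul, abs_of_pos hf1p, abs_of_pos hr0, mul_comm 4 Cg]
    exact div_le_div₀ (by positivity) (mul_le_mul hgr hr.2 hr0.le hCg) hc (hf1 r hr)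
  have b2 : |(g1 r * r + g r) / f1 r| ≤ 4 * Cg / c := by
    rw [abs_div, abs_of_pos hf1p]
    refine div_le_div₀ (by positivity) ?_ hc (hf1 r hr)
    refine (abs_add_le _ _).trans ?_
    rw [abs_mul, abs_of_pos hr0]
    nlinarith [hgb r, mul_le_mul_of_nonneg_left hr.2 (abs_nonneg (g1 r)), abs_nonneg (g r)]
  have b3 : |f2 r / f1 r| ≤ M / c := by
    rw [abs_div, abs_of_pos hf1p]
    exact div_le_div₀ hM (hf2 r hr) hc (hf1 r hr)
  have eA1 : A1 r = k1 r * (g r * r / f1 r) + k r * ((g1 r * r + g r) / f1 r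
      - (g r * r / f1 r) * (f2 r / f1 r)) := by
    simp only [hA1]; field_simp; ring
  have eA : A r = k r * (g r * r / f1 r) := by simp only [hA]; ring
  have hA1b : |A1 r| ≤ |k1 r| * (4 * Cg / c) + k r * (4 * Cg / c + (4 * Cg / c) * (M / c)) := by
    rw [eA1]
    refine (abs_add_le _ _).trans ?_
    rw [abs_mul, abs_mul, abs_of_nonneg (hk0 r)]
    gcongr
    · exact hk0 r
    · refine (abs_sub _ _).trans ?_
      rw [abs_mul]
      gcongr
  have hAb : |A r * e1 r| ≤ k r * (4 * Cg / c) * L := by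
    rw [eA, abs_mul, abs_mul, abs_of_nonneg (hk0 r)]
    have := hk0 r
    gcongr
    exact he1 r hr
  have hPb : |P r| ≤ |A1 r| + |A r * e1 r| := by
    refine (abs_add_le _ _).trans ?_
    rw [abs_mul (A1 r), abs_mul (A r * e1 r)]
    gcongr
    · exact mul_le_of_le_one_right (abs_nonneg _) (Real.abs_sin_le_one _)
    · exact mul_le_of_le_one_right (abs_nonneg _) (Real.abs_cos_le_one _)
  refine hPb.trans ((add_le_add hA1b hAb).trans ?_)
  have hk := hk0 r
  have x1 : 0 ≤ 4 * M / c ^ 2 * Cg * |k1 r| := by positivity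
  have x2 : 0 ≤ 4 * M / c ^ 2 * Cg * (L * k r) := by positivity
  have : (4 / c + 4 * M / c ^ 2) * Cg * ((1 + L) * k r + |k1 r|) =
    |k1 r| * (4 * Cg / c) + k r * (4 * Cg / c + (4 * Cg / c) * (M / c)) + k r * (4 * Cg / c) * L
     + 4 * M / c ^ 2 * Cg * |k1 r| + 4 * M / c ^ 2 * Cg * (L * k r) := by
    field_simp; ring
  linarith

noncomputable def uvec (θ : ℝ) : ℂ := Real.cos θ + Real.sin θ * Complex.I

lemma norm_uvec (θ : ℝ) : ‖uvec θ‖ = 1 := by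
  unfold uvec; exact_mod_cast Complex.norm_cos_add_sin_mul_I θ

noncomputable def kS (δ s : ℝ) (z : ℂ) : ℝ := (‖z‖ ^ 2 + s ^ 2) ^ ((δ - 2) / 2)

noncomputable def kG (δ s : ℝ) (z : ℂ) : ℝ := s * ‖z‖ * (‖z‖ ^ 2 + s ^ 2) ^ ((δ - 2) / 2 - 1)

lemma kS_cont (δ : ℝ) {s : ℝ} (hs : 0 < s) : Continuous (kS δ s) := by
  unfold kS
  apply Continuous.rpow_const (by fun_prop)
  intro z; left; positivity

lemma kG_cont (δ : ℝ) {s : ℝ} (hs : 0 < s) : Continuous (kG δ s) := by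
  unfold kG
  apply Continuous.mul (by fun_prop)
  apply Continuous.rpow_const (by fun_prop)
  intro z; left; positivity

lemma kS_nonneg (δ s : ℝ) (z : ℂ) : 0 ≤ kS δ s z := by unfold kS; positivity

lemma kG_nonneg (δ : ℝ) {s : ℝ} (hs : 0 < s) (z : ℂ) : 0 ≤ kG δ s z := by unfold kG; positivity

lemma ray_bound {f f1 f2 ferr e1 g g1 : ℝ → ℝ} {c M K Cg θ δ ε : ℝ} (w : ℂ)
    (hδ0 : 0 < δ) (hδ1 : δ < 1) (hε : ε < 1)
    (hc : 0 < c) (hK : 1 ≤ K)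
    (hfc : ContinuousOn f (Set.Icc (1 / 2) 4)) (hf1c : ContinuousOn f1 (Set.Icc (1 / 2) 4))
    (hf2c : ContinuousOn f2 (Set.Icc (1 / 2) 4)) (hec : ContinuousOn ferr (Set.Icc (1 / 2) 4))
    (he1c : ContinuousOn e1 (Set.Icc (1 / 2) 4)) (hgc : Continuous g) (hg1c : Continuous g1)
    (hfd : ∀ r ∈ Set.Ioo (1 / 2 : ℝ) 4, HasDerivAt f (f1 r) r)
    (hf1d : ∀ r ∈ Set.Ioo (1 / 2 : ℝ) 4, HasDerivAt f1 (f2 r) r)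
    (hed : ∀ r ∈ Set.Ioo (1 / 2 : ℝ) 4, HasDerivAt ferr (e1 r) r)
    (hgd : ∀ r, HasDerivAt g (g1 r) r)
    (hf1 : ∀ r ∈ Set.Icc (1 / 2 : ℝ) 4, c ≤ f1 r) (hf2 : ∀ r ∈ Set.Icc (1 / 2 : ℝ) 4, |f2 r| ≤ M)
    (he1 : ∀ r ∈ Set.Icc (1 / 2 : ℝ) 4, |e1 r| ≤ K ^ (1 - ε))
    (hgb : ∀ r, |g r| + |g1 r| ≤ Cg)
    (hga : g (1 / 2) = 0) (hgb4 : g 4 = 0) (β : ℝ) :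
    |∫ r in (1 / 2 : ℝ)..4, r * (g r * Real.cos (β - K * f r + ferr r) *
        kS δ K⁻¹ (w - r * uvec θ))| ≤
      (4 * (4 / c + 4 * M / c ^ 2) * Cg) * ∫ r in (1 / 2 : ℝ)..4,
        r * (kG δ K⁻¹ (w - r * uvec θ) + K ^ (-ε) * kS δ K⁻¹ (w - r * uvec θ)) := by
  have h12 : (1 / 2 : ℝ) ≤ 4 := by norm_num
  have hK0 : 0 < K := by linarith
  have hCg : 0 ≤ Cg := (add_nonneg (abs_nonneg _) (abs_nonneg _)).trans (hgb 0)
  have hM : 0 ≤ M := (abs_nonneg _).trans (hf2 1 (by norm_num))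
  have hs : 0 < K⁻¹ := inv_pos.2 hK0
  set s := K⁻¹ with hsdef
  have hline : Continuous fun r : ℝ => w - r * uvec θ := by fun_prop
  have hz : ∀ r : ℝ, HasDerivAt (fun r : ℝ => w - r * uvec θ) (-uvec θ) r := fun r => by
    have := ((Complex.ofRealCLM.hasDerivAt (x := r)).mul_const (uvec θ)).const_sub w
    simpa using this
  set k1 : ℝ → ℝ := fun r => 2 * inner ℝ (w - r * uvec θ) (-uvec θ) * ((δ - 2) / 2) *
    (‖w - r * uvec θ‖ ^ 2 + s ^ 2) ^ ((δ - 2) / 2 - 1) with hk1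
  have hkd : ∀ r : ℝ, HasDerivAt (fun r : ℝ => kS δ s (w - r * uvec θ)) (k1 r) r := fun r => by
    have := (((hz r).norm_sq).add_const (s ^ 2)).rpow_const (p := (δ - 2) / 2) (Or.inl (by positivity))
    exact this
  have hk1c : Continuous k1 := by
    apply Continuous.mul (by fun_prop)
    apply Continuous.rpow_const (by fun_prop)
    intro z; left; positivity
  have hk1b : ∀ r, K⁻¹ * |k1 r| ≤ 2 * kG δ s (w - r * uvec θ) := fun r => by
    simp only [hk1, kG]
    have hp : 0 ≤ (‖w - r * uvec θ‖ ^ 2 + s ^ 2) ^ ((δ - 2) / 2 - 1) := by positivity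
    rw [abs_mul, abs_mul, abs_mul, abs_of_nonneg hp, abs_two, abs_of_neg (show (δ-2)/2 < 0 by linarith)]
    have hi : |inner ℝ (w - r * uvec θ) (-uvec θ)| ≤ ‖w - r * uvec θ‖ := by
      have := abs_real_inner_le_norm (w - r * uvec θ) (-uvec θ)
      rwa [norm_neg, norm_uvec, mul_one] at this
    have hq : |inner ℝ (w - r * uvec θ) (-uvec θ)| * (-((δ - 2) / 2)) ≤ ‖w - r * uvec θ‖ * 1 :=
      mul_le_mul hi (by linarith) (by linarith) (norm_nonneg _)
    calc _ = 2 * s * (|inner ℝ (w - r * uvec θ) (-uvec θ)| * (-((δ - 2) / 2))) * (‖w - r * uvec θ‖ ^ 2 + s ^ 2) ^ ((δ - 2) / 2 - 1) := by ring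
      _ ≤ 2 * s * (‖w - r * uvec θ‖ * 1) * (‖w - r * uvec θ‖ ^ 2 + s ^ 2) ^ ((δ - 2) / 2 - 1) := by gcongr
      _ = _ := by ring
  have hkSc := (kS_cont δ hs).comp hline
  have hkGc := (kG_cont δ hs).comp hline
  have main := ibp (θ := β) (L := K ^ (1 - ε)) hc (by positivity) hK0 hfc hf1c hf2c hec he1c hgc hg1c
    hkSc hk1c hfd hf1d hed hgd hkd hf1 hf2 he1 hgb (fun r => kS_nonneg _ _ _) hga hgb4
  refine main.trans ?_
  rw [show 4 * (4 / c + 4 * M / c ^ 2) * Cg = (4 / c + 4 * M / c ^ 2) * Cg * 4 by ring, mul_assoc _ 4]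
  refine mul_le_mul_of_nonneg_left ?_ (by positivity)
  rw [← intervalIntegral.integral_const_mul, ← intervalIntegral.integral_const_mul]
  simp only [Function.comp_def] at hkSc hkGc ⊢
  refine intervalIntegral.integral_mono_on h12 (Continuous.intervalIntegrable (by fun_prop) _ _) (Continuous.intervalIntegrable (by fun_prop) _ _) ?_
  intro r hr
  have hr1 : 1 ≤ 2 * r := by linarith [hr.1]
  have h1 := hk1b r
  have hS := kS_nonneg δ s (w - r * uvec θ)
  have hG := kG_nonneg δ hs (w - r * uvec θ)
  have hKe : K⁻¹ * (1 + K ^ (1 - ε)) ≤ 2 * K ^ (-ε) := by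
    have e1 : K⁻¹ * K ^ (1 - ε) = K ^ (-ε) := by
      rw [← Real.rpow_neg_one, ← Real.rpow_add hK0]; congr 1; ring
    have e2 : K⁻¹ ≤ K ^ (-ε) := by
      rw [← Real.rpow_neg_one]
      exact Real.rpow_le_rpow_of_exponent_le hK (by linarith)
    rw [mul_add, e1]; linarith
  set T := kG δ s (w - r * uvec θ) + K ^ (-ε) * kS δ s (w - r * uvec θ) with hT
  have hT0 : 0 ≤ T := by positivity
  calc _ = K⁻¹ * (1 + K ^ (1 - ε)) * kS δ s (w - r * uvec θ) + K⁻¹ * |k1 r| := by ring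
    _ ≤ 2 * K ^ (-ε) * kS δ s (w - r * uvec θ) + 2 * kG δ s (w - r * uvec θ) := by gcongr
    _ = 2 * T := by rw [hT]; ring
    _ ≤ _ := by nlinarith

lemma polar_symm_uvec (p : ℝ × ℝ) : Complex.polarCoord.symm p = (p.1 : ℂ) * uvec p.2 := by
  rw [Complex.polarCoord_symm_apply]; rfl

lemma arg_uvec {r θ : ℝ} (hr : 0 < r) (hθ : θ ∈ Set.Ioo (-π) π) :
    Complex.arg ((r : ℂ) * uvec θ) = θ := by
  have := Complex.arg_mul_cos_add_sin_mul_I hr (Set.Ioo_subset_Ioc_self hθ)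
  unfold uvec; push_cast; exact this

lemma norm_ru {r θ : ℝ} (hr : 0 < r) : ‖(r : ℂ) * uvec θ‖ = r := by
  rw [norm_mul, norm_uvec, mul_one, Complex.norm_real, Real.norm_of_nonneg hr.le]

lemma uvec_cont : Continuous uvec := by unfold uvec; fun_prop

/-- passage from rays to the plane -/
lemma planar {F m : ℂ → ℝ} {C : ℝ} (hC : 0 ≤ C) (hFi : Integrable F) (hFm : Measurable F)
    (hmc : Continuous m) (hm0 : ∀ z, 0 ≤ m z)
    (hF0 : ∀ z, ‖z‖ ∉ Set.Ioo (1 / 2 : ℝ) 4 → F z = 0)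
    (hray : ∀ θ ∈ Set.Ioo (-π) π, |∫ r in (1 / 2 : ℝ)..4, r * F (r * uvec θ)| ≤
      C * ∫ r in (1 / 2 : ℝ)..4, r * m (r * uvec θ)) :
    ‖∫ z, F z‖ₑ ≤ ENNReal.ofReal C * ∫⁻ z in Metric.ball (0 : ℂ) 4, ENNReal.ofReal (m z) := by
  have h12 : (1 / 2 : ℝ) ≤ 4 := by norm_num
  have hpc : Measurable fun p : ℝ × ℝ => (p.1 : ℂ) * uvec p.2 :=
    (by have := uvec_cont; fun_prop : Continuous fun p : ℝ × ℝ => (p.1 : ℂ) * uvec p.2).measurable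
  have htar : (volume : Measure (ℝ × ℝ)).restrict polarCoord.target =
      (volume.restrict (Set.Ioi 0)).prod (volume.restrict (Set.Ioo (-π) π)) := by
    rw [Measure.prod_restrict]; rfl
  rw [← Complex.integral_comp_polarCoord_symm F, ← lintegral_indicator measurableSet_ball,
    ← Complex.lintegral_comp_polarCoord_symm]
  simp only [polar_symm_uvec, smul_eq_mul]
  have hint : Integrable (fun p : ℝ × ℝ => p.1 * F (p.1 * uvec p.2))
      (volume.restrict polarCoord.target) := by
    refine ⟨(measurable_fst.mul (hFm.comp hpc)).aestronglyMeasurable, ?_⟩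
    have h2 := hFi.2
    rw [HasFiniteIntegral, ← Complex.lintegral_comp_polarCoord_symm] at h2
    simp only [polar_symm_uvec, smul_eq_mul] at h2
    refine lt_of_le_of_lt (le_of_eq ?_) h2
    refine setLIntegral_congr_fun (polarCoord.open_target.measurableSet) fun p hp => ?_
    have : 0 < p.1 := hp.1
    simp only [enorm_mul]
    rw [Real.enorm_of_nonneg this.le]
  rw [htar] at hint ⊢
  rw [integral_prod_symm _ hint, lintegral_prod_symm]
  swap
  · refine Measurable.aemeasurable ?_
    refine (measurable_fst.ennreal_ofReal).mul ?_
    exact (Measurable.indicator (by fun_prop) measurableSet_ball).comp hpc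
  refine (enorm_integral_le_lintegral_enorm _).trans ?_
  rw [← lintegral_const_mul']
  swap
  · exact ENNReal.ofReal_ne_top
  refine setLIntegral_mono' measurableSet_Ioo fun θ hθ => ?_
  have e1 : ∫ r in Set.Ioi (0:ℝ), r * F (r * uvec θ) = ∫ r in (1 / 2 : ℝ)..4, r * F (r * uvec θ) := by
    rw [intervalIntegral.integral_of_le h12]
    refine (setIntegral_eq_of_subset_of_forall_sdiff_eq_zero measurableSet_Ioi ?_ ?_)
    · intro r hr; have := hr.1; simp only [Set.mem_Ioi]; linarith
    · intro r hr
      have hr0 : 0 < r := hr.1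
      rw [hF0, mul_zero]
      rw [norm_ru hr0]
      exact fun h => hr.2 (Set.Ioo_subset_Ioc_self h)
  show ‖∫ r in Set.Ioi (0:ℝ), r * F (r * uvec θ)‖ₑ ≤ _
  rw [e1, Real.enorm_eq_ofReal_abs]
  refine (ENNReal.ofReal_le_ofReal (hray θ hθ)).trans ?_
  rw [ENNReal.ofReal_mul hC]
  gcongr
  have hcont : Continuous fun r : ℝ => r * m (r * uvec θ) := by fun_prop
  rw [intervalIntegral.integral_of_le h12, integral_Ioc_eq_integral_Ioo,
    ofReal_integral_eq_lintegral_ofReal]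
  · calc _ ≤ ∫⁻ r in Set.Ioo (1 / 2 : ℝ) 4, ENNReal.ofReal r * (Metric.ball (0:ℂ) 4).indicator (fun z => ENNReal.ofReal (m z)) (r * uvec θ) := by
          refine setLIntegral_mono' measurableSet_Ioo fun r hr => ?_
          have hr0 : 0 < r := by linarith [hr.1]
          rw [Set.indicator_of_mem, ENNReal.ofReal_mul hr0.le]
          rw [mem_ball_zero_iff, norm_ru hr0]; exact hr.2
      _ ≤ _ := by
          refine lintegral_mono_set ?_
          intro r hr; have := hr.1; simp only [Set.mem_Ioi]; linarith
  · exact (hcont.integrableOn_Icc).mono_set Set.Ioo_subset_Icc_self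
  · refine (ae_restrict_mem measurableSet_Ioo).mono fun r hr => ?_
    have hr0 : 0 < r := by linarith [hr.1]
    exact mul_nonneg hr0.le (hm0 _)

lemma pointwise {f f1 f2 : ℝ → ℝ} {c M δ : ℝ} (hδ0 : 0 < δ) (hδ1 : δ < 1)
    (hc : 0 < c)
    (hfc : ContinuousOn f (Set.Icc (1 / 2) 4)) (hf1c : ContinuousOn f1 (Set.Icc (1 / 2) 4))
    (hf2c : ContinuousOn f2 (Set.Icc (1 / 2) 4))
    (hfd : ∀ r ∈ Set.Ioo (1 / 2 : ℝ) 4, HasDerivAt f (f1 r) r)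
    (hf1d : ∀ r ∈ Set.Ioo (1 / 2 : ℝ) 4, HasDerivAt f1 (f2 r) r)
    (hf1 : ∀ r ∈ Set.Icc (1 / 2 : ℝ) 4, c ≤ f1 r) (hf2 : ∀ r ∈ Set.Icc (1 / 2 : ℝ) 4, |f2 r| ≤ M) :
    ∃ C : ℝ, 0 ≤ C ∧ ∀ (ε K Cg : ℝ) (g g1 ferr e1 : ℝ → ℝ) (N : ℕ) (w : ℂ), δ < ε → ε < 1 → 1 ≤ K →
      ContinuousOn ferr (Set.Icc (1 / 2) 4) →
      ContinuousOn e1 (Set.Icc (1 / 2) 4) → Continuous g → Continuous g1 →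
      (∀ r ∈ Set.Ioo (1 / 2 : ℝ) 4, HasDerivAt ferr (e1 r) r) →
      (∀ r, HasDerivAt g (g1 r) r) →
      (∀ r ∈ Set.Icc (1 / 2 : ℝ) 4, |e1 r| ≤ K ^ (1 - ε)) →
      (∀ r, |g r| + |g1 r| ≤ Cg) → (∀ r, r ∉ Set.Ioo (1 / 2 : ℝ) 4 → g r = 0) →
      |∫ z : ℂ, g ‖z‖ * Real.cos (N * Complex.arg z - K * f ‖z‖ + ferr ‖z‖) / ‖w - z‖ ^ (2 - δ)| ≤
        C * K ^ (-δ) * Cg * (1 + ‖w‖) ^ (δ - 2) := by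
  have h12 : (1 / 2 : ℝ) ≤ 4 := by norm_num
  have hM : 0 ≤ M := (abs_nonneg _).trans (hf2 1 (by norm_num))
  obtain ⟨C0, hC0, hmaj⟩ := majorant_bound hδ0 hδ1
  set C1 := 4 * (4 / c + 4 * M / c ^ 2) with hC1
  have hC1p : 0 ≤ C1 := by positivity
  refine ⟨(C1 + 1) * C0, by positivity, ?_⟩
  intro ε K Cg g g1 ferr e1 N w hδε hε hK hec he1c hgc hg1c hed hgd he1 hgb hg0
  have hK0 : 0 < K := by linarith
  have hs : 0 < K⁻¹ := inv_pos.2 hK0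
  have hCg : 0 ≤ Cg := (add_nonneg (abs_nonneg _) (abs_nonneg _)).trans (hgb 0)
  set h : ℂ → ℝ := fun z => g ‖z‖ * Real.cos (N * Complex.arg z - K * f ‖z‖ + ferr ‖z‖) with hh
  have hh0 : ∀ z, ‖z‖ ∉ Set.Ioo (1 / 2 : ℝ) 4 → h z = 0 := fun z hz => by
    simp only [hh, hg0 _ hz, zero_mul]
  have hhb : ∀ z, |h z| ≤ Cg := fun z => by
    simp only [hh]; rw [abs_mul]
    refine (mul_le_of_le_one_right (abs_nonneg _) (Real.abs_cos_le_one _)).trans ?_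
    linarith [hgb ‖z‖, abs_nonneg (g1 ‖z‖)]
  have hhball : ∀ z, z ∉ Metric.ball (0 : ℂ) 4 → h z = 0 := fun z hz => by
    apply hh0; intro h'; apply hz; simpa using h'.2
  have hhm : Measurable h := by
    have e : h = fun z => g ‖z‖ * Real.cos (N * Complex.arg z
        - K * Set.IccExtend h12 (Set.domRestrict _ f) ‖z‖ + Set.IccExtend h12 (Set.domRestrict _ ferr) ‖z‖) := by
      ext z
      by_cases hz : ‖z‖ ∈ Set.Ioo (1 / 2 : ℝ) 4
      · have hz' := Set.Ioo_subset_Icc_self hz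
        simp only [hh]
        rw [Set.IccExtend_of_mem _ _ hz', Set.IccExtend_of_mem _ _ hz']; rfl
      · simp only [hh, hg0 _ hz, zero_mul]
    have c1 : Measurable (Set.IccExtend h12 (Set.domRestrict (Set.Icc (1/2:ℝ) 4) f)) :=
      (continuousOn_iff_continuous_domRestrict.1 hfc).Icc_extend'.measurable
    have c2 : Measurable (Set.IccExtend h12 (Set.domRestrict (Set.Icc (1/2:ℝ) 4) ferr)) :=
      (continuousOn_iff_continuous_domRestrict.1 hec).Icc_extend'.measurable
    rw [e]
    have hgm := hgc.measurable
    have ham := Complex.measurable_arg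
    fun_prop
  have hline : Continuous fun z : ℂ => w - z := by fun_prop
  have hkSc : Continuous fun z : ℂ => kS δ K⁻¹ (w - z) := (kS_cont δ hs).comp hline
  have hkGc : Continuous fun z : ℂ => kG δ K⁻¹ (w - z) := (kG_cont δ hs).comp hline
  set F : ℂ → ℝ := fun z => h z * kS δ K⁻¹ (w - z) with hF
  have hFm : Measurable F := hhm.mul hkSc.measurable
  have hFi : Integrable F := by
    have : IntegrableOn (fun z : ℂ => Cg * kS δ K⁻¹ (w - z)) (Metric.ball 0 4) :=
      ((hkSc.const_mul Cg).continuousOn.integrableOn_compact (isCompact_closedBall (0:ℂ) 4)).mono_set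
        Metric.ball_subset_closedBall
    rw [← integrable_indicator_iff measurableSet_ball] at this
    refine this.mono' hFm.aestronglyMeasurable (Filter.Eventually.of_forall fun z => ?_)
    by_cases hz : z ∈ Metric.ball (0:ℂ) 4
    · rw [Set.indicator_of_mem hz, Real.norm_eq_abs]
      simp only [hF]
      rw [abs_mul, abs_of_nonneg (kS_nonneg _ _ _)]
      exact mul_le_mul_of_nonneg_right (hhb z) (kS_nonneg _ _ _)
    · rw [Set.indicator_of_notMem hz]; simp [hF, hhball z hz]
  set D : ℂ → ℝ := fun z => h z * (‖w - z‖ ^ (δ - 2) - kS δ K⁻¹ (w - z)) with hD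
  have hDm : Measurable D := by
    have := hkSc.measurable
    fun_prop
  have hne : ∀ᵐ z : ℂ, z ≠ w := by
    simp [ae_iff, measure_singleton]
  have hDb : ∀ z, z ≠ w → |D z| ≤ Cg * Hs δ K⁻¹ ‖w - z‖ := fun z hz => by
    have hp : 0 < ‖w - z‖ := norm_pos_iff.2 (sub_ne_zero.2 hz.symm)
    simp only [hD]
    have hle : kS δ K⁻¹ (w - z) ≤ ‖w - z‖ ^ (δ - 2) := ks_le hδ1 hp
    rw [abs_mul, abs_of_nonneg (sub_nonneg.2 hle)]
    exact mul_le_mul (hhb z) (kdiff_le hδ0 hδ1 hs hp) (sub_nonneg.2 (ks_le hδ1 hp)) hCg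
  have hDi : Integrable D := by
    have : Integrable (fun z : ℂ => Cg * Hs δ K⁻¹ ‖w - z‖) :=
      ((Hs_integrable hδ0 hδ1 hs).comp_sub_left w).const_mul Cg
    refine this.mono' hDm.aestronglyMeasurable (hne.mono fun z hz => ?_)
    exact hDb z hz
  have hsplit : ∫ z : ℂ, h z / ‖w - z‖ ^ (2 - δ) = (∫ z, F z) + ∫ z, D z := by
    rw [← integral_add hFi hDi]
    congr 1; ext z
    simp only [hF, hD]
    rw [show 2 - δ = -(δ - 2) by ring, Real.rpow_neg (norm_nonneg _), div_inv_eq_mul]; ring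
  have hFb := planar (F := F) (m := fun z => kG δ K⁻¹ (w - z) + K ^ (-ε) * kS δ K⁻¹ (w - z))
    (C := C1 * Cg) (by positivity) hFi hFm (by fun_prop)
    (fun z => add_nonneg (kG_nonneg δ hs _) (mul_nonneg (by positivity) (kS_nonneg _ _ _)))
    (fun z hz => by simp only [hF, hh0 z hz, zero_mul])
    (fun θ hθ => by
      have := ray_bound (θ := θ) w hδ0 hδ1 hε hc hK hfc hf1c hf2c hec he1c hgc hg1c hfd hf1d hed hgd
        hf1 hf2 he1 hgb (hg0 _ (by norm_num)) (hg0 _ (by norm_num)) (N * θ)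
      refine le_trans (le_of_eq ?_) this
      congr 1
      refine intervalIntegral.integral_congr fun r hr => ?_
      rw [Set.uIcc_of_le h12] at hr
      have hr0 : 0 < r := by linarith [hr.1]
      simp only [hF, hh]
      rw [norm_ru hr0, arg_uvec hr0 hθ])
  set B := ∫⁻ z in Metric.ball (0 : ℂ) 4, ENNReal.ofReal
        (Hs δ K⁻¹ ‖w - z‖ + K ^ (-ε) * ‖w - z‖ ^ (δ - 2)) with hB
  have hFb' : ‖∫ z, F z‖ₑ ≤ ENNReal.ofReal (C1 * Cg) * B := by
    refine hFb.trans ?_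
    gcongr
    refine lintegral_mono_ae ?_
    refine (ae_restrict_of_ae hne).mono fun z hz => ?_
    have hp : 0 < ‖w - z‖ := norm_pos_iff.2 (sub_ne_zero.2 hz.symm)
    apply ENNReal.ofReal_le_ofReal
    have a1 : kG δ K⁻¹ (w - z) ≤ _ := kgrad_le hδ1 hs hp.le
    have a2 : kS δ K⁻¹ (w - z) ≤ _ := ks_le hδ1 hp
    gcongr
  have hDb' : ‖∫ z, D z‖ₑ ≤ ENNReal.ofReal Cg * B := by
    refine (enorm_integral_le_lintegral_enorm _).trans ?_
    rw [hB, ← lintegral_const_mul' _ _ ENNReal.ofReal_ne_top, ← lintegral_indicator measurableSet_ball]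
    refine lintegral_mono_ae (hne.mono fun z hz => ?_)
    by_cases hzb : z ∈ Metric.ball (0:ℂ) 4
    · rw [Set.indicator_of_mem hzb, ← ENNReal.ofReal_mul hCg, Real.enorm_eq_ofReal_abs]
      apply ENNReal.ofReal_le_ofReal
      refine (hDb z hz).trans ?_
      apply mul_le_mul_of_nonneg_left _ hCg
      have : 0 ≤ K ^ (-ε) * ‖w - z‖ ^ (δ - 2) := by positivity
      linarith
    · simp [hD, hhball z hzb]
  have hfin : ENNReal.ofReal |∫ z : ℂ, h z / ‖w - z‖ ^ (2 - δ)| ≤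
      ENNReal.ofReal ((C1 + 1) * C0 * K ^ (-δ) * Cg * (1 + ‖w‖) ^ (δ - 2)) := by
    rw [← Real.enorm_eq_ofReal_abs, hsplit]
    calc _ ≤ ENNReal.ofReal (C1 * Cg) * B + ENNReal.ofReal Cg * B :=
          (enorm_add_le _ _).trans (add_le_add hFb' hDb')
      _ = ENNReal.ofReal ((C1 + 1) * Cg) * B := by
          rw [← add_mul, ← ENNReal.ofReal_add (by positivity) hCg]; congr 2; ring
      _ ≤ ENNReal.ofReal ((C1 + 1) * Cg) * ENNReal.ofReal (C0 * K ^ (-δ) * (1 + ‖w‖) ^ (δ - 2)) := by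
          gcongr; exact hmaj ε K w hδε hK
      _ = _ := by
          rw [← ENNReal.ofReal_mul (by positivity)]; congr 1; ring
  exact (ENNReal.ofReal_le_ofReal_iff (by positivity)).1 hfin

lemma to_complex (N : ℕ) (K δ : ℝ) (g f ferr : ℝ → ℝ) (x : EuclideanSpace ℝ (Fin 2)) :
    ∫ y : EuclideanSpace ℝ (Fin 2), (g ‖y‖ * Real.cos (N * polarAngle y - K * f ‖y‖ + ferr ‖y‖)) /
      ‖x - y‖ ^ (2 - δ) =
    ∫ z : ℂ, g ‖z‖ * Real.cos (N * Complex.arg z - K * f ‖z‖ + ferr ‖z‖) /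
      ‖Complex.orthonormalBasisOneI.repr.symm x - z‖ ^ (2 - δ) := by
  have e := Complex.orthonormalBasisOneI.repr.symm
  rw [← (Complex.orthonormalBasisOneI.repr.symm.measurePreserving).integral_comp
    (Complex.orthonormalBasisOneI.repr.symm.toHomeomorph.measurableEmbedding)]
  congr 1; ext y
  rw [← map_sub, LinearIsometryEquiv.norm_map, LinearIsometryEquiv.norm_map,
    Complex.orthonormalBasisOneI_repr_symm_apply]
  rfl

/-- The oscillatory ansatz `ω_K(r,α) = g(r) cos(Nα − K f(r) + f_err(r))`
has `‖ω_K‖_{Ḣ^{−δ}} ≤ C K^{−δ} ‖g‖_{C¹}`, uniformly over `g`, `N`, `K ≥ K₀` and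
error phases `f_err` with `‖f_err‖_{C¹} ≤ K^{1−ε}`. -/
theorem oscillatory_ansatz_neg_sobolev (ε δ : ℝ) (hε : ε ∈ Set.Ioo (0 : ℝ) 1)
    (hδ : δ ∈ Set.Ioo 0 ε) (f : ℝ → ℝ)
    (hf : ContDiffOn ℝ 2 f (Set.Icc (1 / 2) 4))
    (hf' : ∀ r ∈ Set.Icc (1 / 2 : ℝ) 4, 0 < deriv f r) :
    ∃ C K₀ : ℝ, 1 ≤ C ∧ 1 ≤ K₀ ∧
      ∀ (g : ℝ → ℝ) (K : ℝ) (N : ℕ) (ferr : ℝ → ℝ) (Cg : ℝ),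
        ContDiff ℝ 2 g → Function.support g ⊆ Set.Ioo (1 / 2) 4 →
        K₀ ≤ K →
        ContDiffOn ℝ 1 ferr (Set.Icc (1 / 2) 4) →
        (∀ r ∈ Set.Icc (1 / 2 : ℝ) 4, |ferr r| + |deriv ferr r| ≤ K ^ (1 - ε)) →
        (∀ r : ℝ, |g r| + |deriv g r| ≤ Cg) →
        eLpNorm (fun x : EuclideanSpace ℝ (Fin 2) =>
            rieszPot δ (fun y => g ‖y‖ *
              Real.cos (N * polarAngle y - K * f ‖y‖ + ferr ‖y‖)) x) 2 volume ≤
          ENNReal.ofReal (C * K ^ (-δ) * Cg) := by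
  have hε0 := hε.1
  have hε1 := hε.2
  have hδ0 := hδ.1
  have hδε := hδ.2
  have hδ1 : δ < 1 := by linarith
  have hu : UniqueDiffOn ℝ (Set.Icc (1 / 2 : ℝ) 4) := uniqueDiffOn_Icc (by norm_num)
  set S := Set.Icc (1 / 2 : ℝ) 4 with hS
  have hnhds : ∀ r ∈ Set.Ioo (1 / 2 : ℝ) 4, S ∈ nhds r := fun r hr => Icc_mem_nhds hr.1 hr.2
  set f1 := derivWithin f S with hf1def
  set f2 := derivWithin f1 S with hf2def
  have hf1C : ContDiffOn ℝ 1 f1 S := hf.derivWithin hu (by norm_num)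
  have hf2c : ContinuousOn f2 S := hf1C.continuousOn_derivWithin hu le_rfl
  have hfd : ∀ r ∈ Set.Ioo (1 / 2 : ℝ) 4, HasDerivAt f (f1 r) r := fun r hr =>
    ((hf.differentiableOn (by norm_num) r (Set.Ioo_subset_Icc_self hr)).hasDerivWithinAt).hasDerivAt
      (hnhds r hr)
  have hf1d : ∀ r ∈ Set.Ioo (1 / 2 : ℝ) 4, HasDerivAt f1 (f2 r) r := fun r hr =>
    ((hf1C.differentiableOn (by norm_num) r (Set.Ioo_subset_Icc_self hr)).hasDerivWithinAt).hasDerivAt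
      (hnhds r hr)
  have hf1pos : ∀ r ∈ S, 0 < f1 r := fun r hr => by
    have hd : DifferentiableAt ℝ f r := by
      by_contra hcon
      exact (hf' r hr).ne' (deriv_zero_of_not_differentiableAt hcon)
    rw [hf1def, hd.derivWithin (hu r hr)]
    exact hf' r hr
  have hne : S.Nonempty := ⟨1, by norm_num [hS]⟩
  obtain ⟨r0, hr0, hmin⟩ := isCompact_Icc.exists_isMinOn hne hf1C.continuousOn
  obtain ⟨M, hM⟩ := isCompact_Icc.exists_bound_of_continuousOn hf2c
  obtain ⟨C, hC, hpt⟩ := pointwise hδ0 hδ1 (hf1pos r0 hr0) hf.continuousOn hf1C.continuousOn hf2c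
    hfd hf1d (fun r hr => hmin hr) hM
  set φ : EuclideanSpace ℝ (Fin 2) → ℝ := fun x => (1 + ‖x‖) ^ (δ - 2) with hφ
  have hφm : MemLp φ 2 volume := by
    have hm : AEStronglyMeasurable φ volume := by
      apply Measurable.aestronglyMeasurable; fun_prop
    rw [memLp_two_iff_integrable_sq hm]
    have := integrable_one_add_norm (E := EuclideanSpace ℝ (Fin 2)) (μ := volume) (r := 4 - 2 * δ)
      (by rw [finrank_euclideanSpace_fin]; push_cast; linarith)
    refine this.congr (Filter.Eventually.of_forall fun x => ?_)
    simp only [hφ]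
    rw [← Real.rpow_natCast, ← Real.rpow_mul (by positivity)]
    congr 1; push_cast; ring
  set T := (eLpNorm φ 2 volume).toReal with hT
  have hT0 : 0 ≤ T := ENNReal.toReal_nonneg
  set G := |(rieszGamma δ)⁻¹| with hG
  refine ⟨max 1 (G * C * T), 1, le_max_left _ _, le_rfl, ?_⟩
  intro g K N ferr Cg hg hgs hK hferr hferrb hgb
  have hK0 : 0 < K := by linarith
  have hCg : 0 ≤ Cg := (add_nonneg (abs_nonneg _) (abs_nonneg _)).trans (hgb 0)
  have hec : ContinuousOn (derivWithin ferr S) S := hferr.continuousOn_derivWithin hu le_rfl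
  have hed : ∀ r ∈ Set.Ioo (1 / 2 : ℝ) 4, HasDerivAt ferr (derivWithin ferr S r) r := fun r hr =>
    ((hferr.differentiableOn (by norm_num) r (Set.Ioo_subset_Icc_self hr)).hasDerivWithinAt).hasDerivAt
      (hnhds r hr)
  have heb : ∀ r ∈ S, |derivWithin ferr S r| ≤ K ^ (1 - ε) := by
    have hcl : closure (Set.Ioo (1 / 2 : ℝ) 4) = S := closure_Ioo (by norm_num)
    intro r hr
    have hcc : ContinuousOn (fun r => |derivWithin ferr S r|) (closure (Set.Ioo (1 / 2 : ℝ) 4)) := by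
      rw [hcl]; exact hec.abs
    refine le_on_closure (s := Set.Ioo (1 / 2 : ℝ) 4) (g := fun _ => K ^ (1 - ε)) ?_ hcc
      continuousOn_const (by rwa [hcl])
    intro r hr
    have := hferrb r (Set.Ioo_subset_Icc_self hr)
    rw [(hed r hr).deriv] at this
    linarith [abs_nonneg (ferr r)]
  have hgd : ∀ r, HasDerivAt g (deriv g r) r := fun r =>
    ((hg.differentiable (by norm_num)) r).hasDerivAt
  have hg1c : Continuous (deriv g) := hg.continuous_deriv (by norm_num)
  have hg0 : ∀ r, r ∉ Set.Ioo (1 / 2 : ℝ) 4 → g r = 0 := fun r hr => by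
    by_contra hcon; exact hr (hgs hcon)
  have hbound : ∀ x : EuclideanSpace ℝ (Fin 2), ‖rieszPot δ (fun y => g ‖y‖ *
      Real.cos (N * polarAngle y - K * f ‖y‖ + ferr ‖y‖)) x‖ ≤ ((G * C * K ^ (-δ) * Cg) • φ) x := by
    intro x
    have := hpt ε K Cg g (deriv g) ferr (derivWithin ferr S) N
      (Complex.orthonormalBasisOneI.repr.symm x) hδε hε1 hK hferr.continuousOn hec hg.continuous hg1c
      hed hgd heb hgb hg0
    rw [← to_complex, LinearIsometryEquiv.norm_map] at this
    unfold rieszPot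
    rw [norm_mul, Real.norm_eq_abs, Real.norm_eq_abs]
    refine (mul_le_mul_of_nonneg_left this (abs_nonneg _)).trans (le_of_eq ?_)
    simp only [Pi.smul_apply, smul_eq_mul, hφ, hG]
    ring
  refine (eLpNorm_mono_real hbound).trans ?_
  rw [eLpNorm_const_smul, Real.enorm_of_nonneg (by positivity),
    ← ENNReal.ofReal_toReal hφm.2.ne, ← ENNReal.ofReal_mul (by positivity)]
  apply ENNReal.ofReal_le_ofReal
  calc G * C * K ^ (-δ) * Cg * T = (G * C * T) * K ^ (-δ) * Cg := by ring
    _ ≤ _ := by gcongr; exact le_max_right _ _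
end
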